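/- arXiv:2605.21039 — 13 statements merged into one kernel-verified Lean document; each statement's English description precedes it below -/
import Mathlib

section
/- For all natural numbers z₃, z₄, z₅ and each index i ∈ {3,4,5} with z_i ≥ 1, one has D_i(f₃^{z₃} f₄^{z₄} f₅^{z₅}) = z_i·(1 + z₃ + z₄ + z₅) · f_i^{z_i − 1} · ∏_{j ∈ {3,4,5}, j ≠ i} f_j^{z_j}. -/
/-!
Each `D_i` is a second-order operator without zeroth- or first-order part, so it obeys a Leibniz
rule `D (x y) = x D y + y D x + Γ x y`, where the carré du champ `Γ x` is a derivation.
For `f = f_i` and `g`, `h` the other two quadratic forms, one has `D f = 2`, `D g = D h = 0`, and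
`Γ f` acts as an Euler field: `Γ f f = 2 f`, `Γ f g = g`, `Γ f h = h`, whereas `Γ` vanishes on all
pairs from `{g, h}`. Hence `D` kills every monomial in `g, h` (`apply_pow_mul_pow_eq_zero`), and
peeling off one factor `f` at a time gives by induction
`D (f ^ (n + 1) g ^ b h ^ c) = (n + 1) (n + 2 + b + c) f ^ n g ^ b h ^ c` (`apply_monomial`), because
`n (n + 1 + s) + 2 + (2 n + s) = (n + 1) (n + 2 + s)` for `s = b + c`.
-/

/-!
Variables (`Fin 6`): `0 ↦ a₁`, `1 ↦ a₂`, `2 ↦ b₁`, `3 ↦ b₂`, `4 ↦ c₁`, `5 ↦ c₂`.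
We set `f₃ = b₁c₂ − b₂c₁`, `f₄ = a₁b₁ + a₂b₂`, `f₅ = a₁c₁ + a₂c₂` and define the
constant-coefficient differential operators `D₃ = ∂_{b₁}∂_{c₂} − ∂_{b₂}∂_{c₁}`,
`D₄ = ∂_{a₁}∂_{b₁} + ∂_{a₂}∂_{b₂}`, `D₅ = ∂_{a₁}∂_{c₁} + ∂_{a₂}∂_{c₂}`.
-/

open MvPolynomial

namespace Stmt0

abbrev Pol := MvPolynomial (Fin 6) ℚ

noncomputable def f3 : Pol := X 2 * X 5 - X 3 * X 4
noncomputable def f4 : Pol := X 0 * X 2 + X 1 * X 3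
noncomputable def f5 : Pol := X 0 * X 4 + X 1 * X 5

noncomputable def D3 (p : Pol) : Pol := pderiv 2 (pderiv 5 p) - pderiv 3 (pderiv 4 p)
noncomputable def D4 (p : Pol) : Pol := pderiv 0 (pderiv 2 p) + pderiv 1 (pderiv 3 p)
noncomputable def D5 (p : Pol) : Pol := pderiv 0 (pderiv 4 p) + pderiv 1 (pderiv 5 p)

section Abstract

variable {R A : Type*} [CommRing R] [CommRing A] [Algebra R A]

lemma derivation_pow_of_eigen (E : Derivation R A A) {g k : A} (h : E g = k * g) (n : ℕ) :
    E (g ^ n) = n * k * g ^ n := by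
  induction n with
  | zero => simp
  | succ n ih =>
    rw [pow_succ, Derivation.leibniz, ih, h]
    simp only [smul_eq_mul]
    push_cast
    ring

variable {D : A → A} {Γ : A → Derivation R A A}
  (hD : ∀ x y, D (x * y) = x * D y + y * D x + Γ x y)

include hD

lemma apply_one : D 1 = 0 := by
  simpa using hD 1 1

lemma apply_pow_mul_pow_eq_zero {g h : A} (hg : D g = 0) (hh : D h = 0)
    (hgg : Γ g g = 0) (hgh : Γ g h = 0) (hhh : Γ h h = 0) (b c : ℕ) :
    D (g ^ b * h ^ c) = 0 := by
  induction b with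
  | zero =>
    induction c with
    | zero => simpa using apply_one hD
    | succ c ih =>
      simp only [pow_zero, one_mul] at ih ⊢
      rw [pow_succ', hD, ih, hh, Derivation.leibniz_pow, hhh]
      simp
  | succ b ih =>
    rw [pow_succ', mul_assoc, hD, ih, hg, Derivation.leibniz, Derivation.leibniz_pow,
      Derivation.leibniz_pow, hgg, hgh]
    simp

/-- The common computation behind the three identities, for any map `D` satisfying a second-order
Leibniz rule with carré du champ `Γ`. -/
lemma apply_monomial {f g h : A} (hf : D f = 2) (hg : D g = 0) (hh : D h = 0)
    (hff : Γ f f = 2 * f) (hfg : Γ f g = g) (hfh : Γ f h = h)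
    (hgg : Γ g g = 0) (hgh : Γ g h = 0) (hhh : Γ h h = 0) (n b c : ℕ) :
    D (f ^ (n + 1) * (g ^ b * h ^ c)) =
      (n + 1) * (n + 2 + b + c) * f ^ n * (g ^ b * h ^ c) := by
  have euler (m : ℕ) : Γ f (f ^ m * (g ^ b * h ^ c)) =
      (2 * m + b + c) * (f ^ m * (g ^ b * h ^ c)) := by
    rw [Derivation.leibniz, Derivation.leibniz, derivation_pow_of_eigen _ hff,
      derivation_pow_of_eigen (g := g) (k := 1) _ (by rw [hfg, one_mul]),
      derivation_pow_of_eigen (g := h) (k := 1) _ (by rw [hfh, one_mul])]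
    simp only [smul_eq_mul]
    ring
  induction n with
  | zero =>
    have e := euler 0
    simp only [pow_zero, one_mul] at e
    rw [zero_add, pow_one, hD, apply_pow_mul_pow_eq_zero hD hg hh hgg hgh hhh, hf, e]
    push_cast
    ring
  | succ n ih =>
    rw [pow_succ', mul_assoc, hD, ih, hf, euler]
    push_cast
    ring

end Abstract

/-- The carré du champ of the second-order operator `d₁ ∘ d₂ + d₃ ∘ d₄`. -/
noncomputable def carre (d₁ d₂ d₃ d₄ : Derivation ℚ Pol Pol) (x : Pol) : Derivation ℚ Pol Pol :=
  d₁ x • d₂ + d₂ x • d₁ + d₃ x • d₄ + d₄ x • d₃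

lemma carre_apply (d₁ d₂ d₃ d₄ : Derivation ℚ Pol Pol) (x y : Pol) :
    carre d₁ d₂ d₃ d₄ x y = d₁ x * d₂ y + d₂ x * d₁ y + d₃ x * d₄ y + d₄ x * d₃ y := by
  simp [carre]

lemma D3_mul (x y : Pol) : D3 (x * y) =
    x * D3 y + y * D3 x + carre (pderiv 2) (pderiv 5) (-pderiv 3) (pderiv 4) x y := by
  simp only [D3, carre_apply, Derivation.leibniz, map_add, smul_eq_mul, Derivation.neg_apply]
  ring

lemma D4_mul (x y : Pol) : D4 (x * y) =
    x * D4 y + y * D4 x + carre (pderiv 0) (pderiv 2) (pderiv 1) (pderiv 3) x y := by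
  simp only [D4, carre_apply, Derivation.leibniz, map_add, smul_eq_mul]
  ring

lemma D5_mul (x y : Pol) : D5 (x * y) =
    x * D5 y + y * D5 x + carre (pderiv 0) (pderiv 4) (pderiv 1) (pderiv 5) x y := by
  simp only [D5, carre_apply, Derivation.leibniz, map_add, smul_eq_mul]
  ring

/-- For all natural numbers `z₃, z₄, z₅` and each index `i ∈ {3,4,5}` with `z_i ≥ 1`,
`D_i(f₃^{z₃} f₄^{z₄} f₅^{z₅}) = z_i (1 + z₃ + z₄ + z₅) f_i^{z_i − 1} ∏_{j ≠ i} f_j^{z_j}`. -/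
theorem stmt_0 (z3 z4 z5 : ℕ) :
    (1 ≤ z3 →
      D3 (f3 ^ z3 * f4 ^ z4 * f5 ^ z5) =
        (z3 : Pol) * (1 + (z3 : Pol) + (z4 : Pol) + (z5 : Pol)) *
          f3 ^ (z3 - 1) * (f4 ^ z4 * f5 ^ z5)) ∧
    (1 ≤ z4 →
      D4 (f3 ^ z3 * f4 ^ z4 * f5 ^ z5) =
        (z4 : Pol) * (1 + (z3 : Pol) + (z4 : Pol) + (z5 : Pol)) *
          f4 ^ (z4 - 1) * (f3 ^ z3 * f5 ^ z5)) ∧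
    (1 ≤ z5 →
      D5 (f3 ^ z3 * f4 ^ z4 * f5 ^ z5) =
        (z5 : Pol) * (1 + (z3 : Pol) + (z4 : Pol) + (z5 : Pol)) *
          f5 ^ (z5 - 1) * (f3 ^ z3 * f4 ^ z4)) := by
  refine ⟨?_, ?_, ?_⟩
  · intro hz
    obtain ⟨n, rfl⟩ := Nat.exists_eq_add_of_le' hz
    have key := apply_monomial D3_mul (f := f3) (g := f4) (h := f5)
      ?_ ?_ ?_ ?_ ?_ ?_ ?_ ?_ ?_ n z4 z5
    · rw [show f3 ^ (n + 1) * f4 ^ z4 * f5 ^ z5 =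
        f3 ^ (n + 1) * (f4 ^ z4 * f5 ^ z5) by ring, key, Nat.add_sub_cancel]
      push_cast
      ring
    all_goals
      simp [D3, carre_apply, f3, f4, f5, pderiv_X]
    all_goals ring
  · intro hz
    obtain ⟨n, rfl⟩ := Nat.exists_eq_add_of_le' hz
    have key := apply_monomial D4_mul (f := f4) (g := f3) (h := f5)
      ?_ ?_ ?_ ?_ ?_ ?_ ?_ ?_ ?_ n z3 z5
    · rw [show f3 ^ z3 * f4 ^ (n + 1) * f5 ^ z5 =
        f4 ^ (n + 1) * (f3 ^ z3 * f5 ^ z5) by ring, key, Nat.add_sub_cancel]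
      push_cast
      ring
    all_goals
      simp [D4, carre_apply, f3, f4, f5, pderiv_X]
    all_goals ring
  · intro hz
    obtain ⟨n, rfl⟩ := Nat.exists_eq_add_of_le' hz
    have key := apply_monomial D5_mul (f := f5) (g := f3) (h := f4)
      ?_ ?_ ?_ ?_ ?_ ?_ ?_ ?_ ?_ n z3 z4
    · rw [show f3 ^ z3 * f4 ^ z4 * f5 ^ (n + 1) =
        f5 ^ (n + 1) * (f3 ^ z3 * f4 ^ z4) by ring, key, Nat.add_sub_cancel]
      push_cast
      ring
    all_goals
      simp [D5, carre_apply, f3, f4, f5, pderiv_X]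
    all_goals ring

end Stmt0
end

section
/- For each index i ∈ {3,4} and all natural numbers z₃, z₄, z₅, z₆ with z_i ≥ 1, one has E_i(g₃^{z₃} g₄^{z₄} g₅^{z₅} g₆^{z₆}) = z_i·(1 + z_i + z₅ + z₆) · g_i^{z_i − 1} · ∏_{j ∈ {3,4,5,6}, j ≠ i} g_j^{z_j}. -/
/-!
Both operators have the shape `E = D₁D₂ - D₃D₄` with `Dᵢ` derivations, so that
`E (p q) = E p * q + p * E q + B (p, q)`, where `B` is the symmetric first-order cross term
(a derivation in each argument). The proof is an `sl₂`-type commutator argument. For the quadratic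
form `g` dual to `E` one has `E g = 2`, and `B (g, ·)` is the Euler operator counting the degree in
the variables that occur in `E`; hence
`E (g h) = g * E h + (2 + d) * h` whenever `B (g, h) = d * h`.
The remaining factors form a polynomial `h` with `E h = 0` and `B (g, h) = (z₅ + z₆) * h`: harmonicity
holds because `g₅` and `g₆` are linear in the relevant variables and span a totally isotropic
subspace for `B`, and the fourth factor does not involve these variables. Iterating the commutator formula gives
`E (g ^ (n + 1) * h) = (n + 1) * (n + 2 + d) * g ^ n * h`.
-/

/-!
Variables (`Fin 10`): `0 ↦ a₁`, `1 ↦ a₂`, `2 ↦ b₁`, `3 ↦ b₂`, `4 ↦ c₁`, `5 ↦ c₂`,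
`6 ↦ x₁₁`, `7 ↦ x₁₂`, `8 ↦ x₂₁`, `9 ↦ x₂₂`.
We set `g₃ = a₁b₂ − a₂b₁`, `g₄ = x₁₁x₂₂ − x₁₂x₂₁`, `g₅ = Σ b_j x_{jk} c_k`,
`g₆ = Σ a_j x_{jk} c_k`, and the constant-coefficient differential operators
`E₃ = ∂_{a₁}∂_{b₂} − ∂_{a₂}∂_{b₁}`, `E₄ = ∂_{x₁₁}∂_{x₂₂} − ∂_{x₁₂}∂_{x₂₁}`,
`E₅ = Σ ∂_{b_j}∂_{x_{jk}}∂_{c_k}`, `E₆ = Σ ∂_{a_j}∂_{x_{jk}}∂_{c_k}`.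
-/

open MvPolynomial

namespace Stmt1

abbrev Pol := MvPolynomial (Fin 10) ℚ

noncomputable def g3 : Pol := X 0 * X 3 - X 1 * X 2
noncomputable def g4 : Pol := X 6 * X 9 - X 7 * X 8
noncomputable def g5 : Pol := X 2 * X 6 * X 4 + X 2 * X 7 * X 5 + X 3 * X 8 * X 4 + X 3 * X 9 * X 5
noncomputable def g6 : Pol := X 0 * X 6 * X 4 + X 0 * X 7 * X 5 + X 1 * X 8 * X 4 + X 1 * X 9 * X 5

noncomputable def E3 (p : Pol) : Pol := pderiv 0 (pderiv 3 p) - pderiv 1 (pderiv 2 p)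
noncomputable def E4 (p : Pol) : Pol := pderiv 6 (pderiv 9 p) - pderiv 7 (pderiv 8 p)
noncomputable def E5 (p : Pol) : Pol :=
  pderiv 2 (pderiv 6 (pderiv 4 p)) + pderiv 2 (pderiv 7 (pderiv 5 p)) +
    pderiv 3 (pderiv 8 (pderiv 4 p)) + pderiv 3 (pderiv 9 (pderiv 5 p))
noncomputable def E6 (p : Pol) : Pol :=
  pderiv 0 (pderiv 6 (pderiv 4 p)) + pderiv 0 (pderiv 7 (pderiv 5 p)) +
    pderiv 1 (pderiv 8 (pderiv 4 p)) + pderiv 1 (pderiv 9 (pderiv 5 p))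

/-- The second-order operator `D₁D₂ - D₃D₄`. -/
noncomputable def op (D : Fin 4 → Derivation ℚ Pol Pol) (p : Pol) : Pol :=
  D 0 (D 1 p) - D 2 (D 3 p)

/-- The defect of `op D` from being a derivation. -/
noncomputable def cross (D : Fin 4 → Derivation ℚ Pol Pol) (p q : Pol) : Pol :=
  D 0 p * D 1 q + D 1 p * D 0 q - D 2 p * D 3 q - D 3 p * D 2 q

section Abstract

variable (D : Fin 4 → Derivation ℚ Pol Pol)

lemma op_mul (p q : Pol) : op D (p * q) = op D p * q + p * op D q + cross D p q := by
  simp only [op, cross, Derivation.leibniz, map_add, smul_eq_mul]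
  ring

lemma cross_mul (f p q : Pol) : cross D f (p * q) = cross D f p * q + p * cross D f q := by
  simp only [cross, Derivation.leibniz, smul_eq_mul]
  ring

lemma cross_pow_mul {f u h : Pol} {c d : Pol} (hu : cross D f u = c * u)
    (hh : cross D f h = d * h) (n : ℕ) :
    cross D f (u ^ n * h) = (n * c + d) * (u ^ n * h) := by
  induction n with
  | zero => simp [hh]
  | succ n ih =>
    rw [pow_succ', mul_assoc, cross_mul, ih, hu]
    push_cast
    ring

/-- Harmonicity is preserved under multiplication by powers of a harmonic `u` orthogonal to
itself and to `h`. -/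
lemma op_pow_mul_eq_zero {u h : Pol} (hu : op D u = 0) (huu : cross D u u = 0)
    (hh : op D h = 0) (huh : cross D u h = 0) (n : ℕ) : op D (u ^ n * h) = 0 := by
  induction n with
  | zero => simpa using hh
  | succ n ih =>
    have hc := cross_pow_mul D (f := u) (u := u) (h := h) (c := 0) (d := 0)
      (by simp [huu]) (by simp [huh]) n
    rw [pow_succ', mul_assoc, op_mul, ih, hu, hc]
    ring

/-- The iterated commutator formula: `g` raises and `op D` lowers, with `h` a lowest-weight
vector of degree `d`. -/
lemma op_pow_succ_mul {g h d : Pol} (hg : op D g = 2) (hgg : cross D g g = 2 * g)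
    (hh : op D h = 0) (hgh : cross D g h = d * h) (n : ℕ) :
    op D (g ^ (n + 1) * h) = (n + 1) * (n + 2 + d) * (g ^ n * h) := by
  induction n with
  | zero =>
    rw [zero_add, pow_one, op_mul, hg, hh, hgh]
    push_cast
    ring
  | succ n ih =>
    rw [pow_succ', mul_assoc, op_mul, ih, hg, cross_pow_mul D hgg hgh]
    push_cast
    ring

/-- The common form of both identities: `u ^ p * w ^ q * k ^ m` is harmonic of degree `p + q`
when `u`, `w` are harmonic of degree one and span an isotropic space, and `k` is a constant for
all four derivations. -/
lemma op_pow_mul_pow_mul_pow {g u w k : Pol} (hg : op D g = 2) (hgg : cross D g g = 2 * g)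
    (hu : op D u = 0) (hw : op D w = 0) (hgu : cross D g u = u) (hgw : cross D g w = w)
    (huu : cross D u u = 0) (huw : cross D u w = 0) (hww : cross D w w = 0)
    (hk : ∀ i, D i k = 0) {z : ℕ} (hz : 1 ≤ z) (m p q : ℕ) :
    op D (g ^ z * (u ^ p * (w ^ q * k ^ m))) =
      z * (1 + z + p + q) * (g ^ (z - 1) * (u ^ p * (w ^ q * k ^ m))) := by
  obtain ⟨n, rfl⟩ := Nat.exists_eq_add_of_le' hz
  have hkm : ∀ i, D i (k ^ m) = 0 := fun i => by simp [Derivation.leibniz_pow, hk]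
  have hck : ∀ f, cross D f (k ^ m) = 0 := fun f => by simp [cross, hkm]
  have hwk : op D (w ^ q * k ^ m) = 0 :=
    op_pow_mul_eq_zero D hw hww (by simp [op, hkm]) (hck w) q
  have huwk : cross D u (w ^ q * k ^ m) = 0 := by
    simpa using cross_pow_mul D (f := u) (u := w) (h := k ^ m) (c := 0) (d := 0)
      (by simp [huw]) (by simp [hck]) q
  have hgwk := cross_pow_mul D (f := g) (u := w) (h := k ^ m) (c := 1) (d := 0)
    (by simp [hgw]) (by simp [hck]) q
  have hguwk := cross_pow_mul D (c := 1) (by simpa using hgu) hgwk p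
  -- The degree arises as `p * 1 + (q * 1 + 0)`.
  rw [op_pow_succ_mul D hg hgg (op_pow_mul_eq_zero D hu huu hwk huwk p) hguwk n]
  simp only [Nat.add_sub_cancel]
  push_cast
  ring

end Abstract

/-- The derivations occurring in `E3`. -/
noncomputable def D3 : Fin 4 → Derivation ℚ Pol Pol :=
  ![pderiv 0, pderiv 3, pderiv 1, pderiv 2]

/-- The derivations occurring in `E4`. -/
noncomputable def D4 : Fin 4 → Derivation ℚ Pol Pol :=
  ![pderiv 6, pderiv 9, pderiv 7, pderiv 8]

/-- For each index `i ∈ {3,4}` and all naturals `z₃,z₄,z₅,z₆` with `z_i ≥ 1`,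
`E_i(g₃^{z₃}g₄^{z₄}g₅^{z₅}g₆^{z₆}) = z_i (1 + z_i + z₅ + z₆) g_i^{z_i−1} ∏_{j≠i} g_j^{z_j}`. -/
theorem stmt_1 (z3 z4 z5 z6 : ℕ) :
    (1 ≤ z3 →
      E3 (g3 ^ z3 * g4 ^ z4 * g5 ^ z5 * g6 ^ z6) =
        (z3 : Pol) * (1 + (z3 : Pol) + (z5 : Pol) + (z6 : Pol)) *
          g3 ^ (z3 - 1) * (g4 ^ z4 * g5 ^ z5 * g6 ^ z6)) ∧
    (1 ≤ z4 →
      E4 (g3 ^ z3 * g4 ^ z4 * g5 ^ z5 * g6 ^ z6) =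
        (z4 : Pol) * (1 + (z4 : Pol) + (z5 : Pol) + (z6 : Pol)) *
          g4 ^ (z4 - 1) * (g3 ^ z3 * g5 ^ z5 * g6 ^ z6)) := by
  refine ⟨fun hz => ?_, fun hz => ?_⟩
  · have h := op_pow_mul_pow_mul_pow D3 (g := g3) (u := g5) (w := g6) (k := g4)
      ?_ ?_ ?_ ?_ ?_ ?_ ?_ ?_ ?_ ?_ hz z4 z5 z6
    · rw [show g3 ^ z3 * g4 ^ z4 * g5 ^ z5 * g6 ^ z6 =
        g3 ^ z3 * (g5 ^ z5 * (g6 ^ z6 * g4 ^ z4)) by ring]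
      refine Eq.trans h ?_
      ring
    -- The fourth factor is killed by all four derivations; the other goals are identities
    -- between explicit polynomials.
    case refine_10 => intro i; fin_cases i <;> simp [D3, g4, pderiv_X]
    all_goals
      simp [op, cross, D3, g3, g5, g6, pderiv_X]
      try ring
  · have h := op_pow_mul_pow_mul_pow D4 (g := g4) (u := g5) (w := g6) (k := g3)
      ?_ ?_ ?_ ?_ ?_ ?_ ?_ ?_ ?_ ?_ hz z3 z5 z6
    · rw [show g3 ^ z3 * g4 ^ z4 * g5 ^ z5 * g6 ^ z6 =
        g4 ^ z4 * (g5 ^ z5 * (g6 ^ z6 * g3 ^ z3)) by ring]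
      refine Eq.trans h ?_
      ring
    case refine_10 => intro i; fin_cases i <;> simp [D4, g3, pderiv_X]
    all_goals
      simp [op, cross, D4, g4, g5, g6, pderiv_X]
      try ring


end Stmt1
end

section
/- For each index i ∈ {5,6} and all natural numbers z₃, z₄, z₅, z₆ with z_i ≥ 1, one has E_i(g₃^{z₃} g₄^{z₄} g₅^{z₅} g₆^{z₆}) = z_i·(1 + z₄ + z₅ + z₆)·(1 + z₃ + z₅ + z₆) · g_i^{z_i − 1} · ∏_{j ∈ {3,4,5,6}, j ≠ i} g_j^{z_j}. -/
/-!
Writing `y_j = Σ_k x_{jk} c_k`, one has `g₅ = b · y` and `g₆ = a · y`. Both operators factor through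
`M_j = Σ_k ∂_{x_{jk}} ∂_{c_k}`, namely `E₅ = Σ_j ∂_{b_j} M_j` and `E₆ = Σ_j ∂_{a_j} M_j`. With
`φ = g₅^{z₅} g₆^{z₆}` and `φ₅, φ₆` its partial derivatives in `g₅, g₆`, the cofactor identity for
`g₄` and Euler's identity give (`row_one`, `row_two`)

  `M_j (g₃^{z₃} g₄^{z₄} φ) = (1 + z₄ + z₅ + z₆) g₃^{z₃} g₄^{z₄} (b_j φ₅ + a_j φ₆)`.

Applying `Σ_j ∂_{b_j}` (`div_b`), the operator `Σ_j ∂_{b_j} b_j` multiplies a polynomial homogeneous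
of degree `d` in `b` by `d + 2`, and `Σ_j a_j ∂_{b_j}` kills `g₃` and maps `g₅` to `g₆`; together
these produce `z₅ (1 + z₃ + z₅ + z₆)`. The case of `E₆` (`div_a`) is symmetric.
-/

/-!
Variables (`Fin 10`): `0 ↦ a₁`, `1 ↦ a₂`, `2 ↦ b₁`, `3 ↦ b₂`, `4 ↦ c₁`, `5 ↦ c₂`,
`6 ↦ x₁₁`, `7 ↦ x₁₂`, `8 ↦ x₂₁`, `9 ↦ x₂₂`.
We set `g₃ = a₁b₂ − a₂b₁`, `g₄ = x₁₁x₂₂ − x₁₂x₂₁`, `g₅ = Σ b_j x_{jk} c_k`,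
`g₆ = Σ a_j x_{jk} c_k`, and the constant-coefficient differential operators
`E₃ = ∂_{a₁}∂_{b₂} − ∂_{a₂}∂_{b₁}`, `E₄ = ∂_{x₁₁}∂_{x₂₂} − ∂_{x₁₂}∂_{x₂₁}`,
`E₅ = Σ ∂_{b_j}∂_{x_{jk}}∂_{c_k}`, `E₆ = Σ ∂_{a_j}∂_{x_{jk}}∂_{c_k}`.
-/

open MvPolynomial

namespace Stmt2

abbrev Pol := MvPolynomial (Fin 10) ℚ

noncomputable def g3 : Pol := X 0 * X 3 - X 1 * X 2
noncomputable def g4 : Pol := X 6 * X 9 - X 7 * X 8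
noncomputable def g5 : Pol := X 2 * X 6 * X 4 + X 2 * X 7 * X 5 + X 3 * X 8 * X 4 + X 3 * X 9 * X 5
noncomputable def g6 : Pol := X 0 * X 6 * X 4 + X 0 * X 7 * X 5 + X 1 * X 8 * X 4 + X 1 * X 9 * X 5

noncomputable def E3 (p : Pol) : Pol := pderiv 0 (pderiv 3 p) - pderiv 1 (pderiv 2 p)
noncomputable def E4 (p : Pol) : Pol := pderiv 6 (pderiv 9 p) - pderiv 7 (pderiv 8 p)
noncomputable def E5 (p : Pol) : Pol :=
  pderiv 2 (pderiv 6 (pderiv 4 p)) + pderiv 2 (pderiv 7 (pderiv 5 p)) +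
    pderiv 3 (pderiv 8 (pderiv 4 p)) + pderiv 3 (pderiv 9 (pderiv 5 p))
noncomputable def E6 (p : Pol) : Pol :=
  pderiv 0 (pderiv 6 (pderiv 4 p)) + pderiv 0 (pderiv 7 (pderiv 5 p)) +
    pderiv 1 (pderiv 8 (pderiv 4 p)) + pderiv 1 (pderiv 9 (pderiv 5 p))

/-- The formal derivative `n gⁿ⁻¹` of `gⁿ` with respect to `g`. -/
noncomputable def powD (g : Pol) (n : ℕ) : Pol := (n : Pol) * g ^ (n - 1)

/-- The formal second derivative `n (n - 1) gⁿ⁻²` of `gⁿ` with respect to `g`; the factor `n - 1`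
is taken in `Pol`, and the truncated exponent is harmless because the coefficient vanishes for
`n ≤ 1`. -/
noncomputable def powD2 (g : Pol) (n : ℕ) : Pol := (n : Pol) * ((n : Pol) - 1) * g ^ (n - 2)

lemma pderiv_pow_eq (i : Fin 10) (g : Pol) (n : ℕ) :
    pderiv i (g ^ n) = powD g n * pderiv i g := by
  rw [pderiv_pow, powD]

lemma pderiv_powD (i : Fin 10) (g : Pol) (n : ℕ) :
    pderiv i (powD g n) = powD2 g n * pderiv i g := by
  rcases n with _ | n
  · simp [powD, powD2]
  · have h : n + 1 - 2 = n - 1 := by omega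
    simp only [powD, powD2, pderiv_mul, pderiv_pow, Derivation.map_natCast, h,
      Nat.add_sub_cancel]
    push_cast
    ring

lemma powD_mul (g : Pol) (n : ℕ) : powD g n * g = n * g ^ n := by
  rcases n with _ | n
  · simp [powD]
  · simp only [powD, Nat.add_sub_cancel]
    ring

lemma powD2_mul (g : Pol) (n : ℕ) : powD2 g n * g = ((n : Pol) - 1) * powD g n := by
  rcases n with _ | _ | n
  · simp [powD, powD2]
  · simp [powD2]
  · have h : n + 1 + 1 - 2 = n := by omega
    simp only [powD, powD2, h, Nat.add_sub_cancel]
    ring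

lemma pderiv_g3 (i : Fin 10) :
    pderiv i g3 = ![X 3, -X 2, -X 1, X 0, 0, 0, 0, 0, 0, 0] i := by
  fin_cases i <;> simp [g3, pderiv_X]

lemma pderiv_g4 (i : Fin 10) :
    pderiv i g4 = ![0, 0, 0, 0, 0, 0, X 9, -X 8, -X 7, X 6] i := by
  fin_cases i <;> simp [g4, pderiv_X]

lemma pderiv_g5 (i : Fin 10) :
    pderiv i g5 = ![0, 0, X 6 * X 4 + X 7 * X 5, X 8 * X 4 + X 9 * X 5,
      X 2 * X 6 + X 3 * X 8, X 2 * X 7 + X 3 * X 9,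
      X 2 * X 4, X 2 * X 5, X 3 * X 4, X 3 * X 5] i := by
  fin_cases i <;> simp [g5, pderiv_X] <;> ring

lemma pderiv_g6 (i : Fin 10) :
    pderiv i g6 = ![X 6 * X 4 + X 7 * X 5, X 8 * X 4 + X 9 * X 5, 0, 0,
      X 0 * X 6 + X 1 * X 8, X 0 * X 7 + X 1 * X 9,
      X 0 * X 4, X 0 * X 5, X 1 * X 4, X 1 * X 5] i := by
  fin_cases i <;> simp [g6, pderiv_X] <;> ring

/-- The polynomial `g₃^{z₃} g₄^{z₄} (β ∂φ/∂g₅ + α ∂φ/∂g₆)` with `φ = g₅^{z₅} g₆^{z₆}`. -/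
noncomputable def polar (z3 z4 z5 z6 : ℕ) (β α : Pol) : Pol :=
  g3 ^ z3 * g4 ^ z4 * (β * (powD g5 z5 * g6 ^ z6) + α * (g5 ^ z5 * powD g6 z6))

/-- First half of the computation, for the row `j = 1`: `Σ_k ∂_{x_{1k}} ∂_{c_k}` acts on the
product of powers as `(1 + z₄ + z₅ + z₆)` times the polarisation in the direction `(b₁, a₁)`. The
three sources are the cofactor expansion of `g₄`, Euler's identity for `φ` in `(g₅, g₆)`, and the
two terms in which `∂_{x_{1k}}` meets the coefficient `x_{1k}`. -/
lemma row_one (z3 z4 z5 z6 : ℕ) :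
    pderiv 6 (pderiv 4 (g3 ^ z3 * g4 ^ z4 * g5 ^ z5 * g6 ^ z6)) +
      pderiv 7 (pderiv 5 (g3 ^ z3 * g4 ^ z4 * g5 ^ z5 * g6 ^ z6)) =
    ((1 + z4 + z5 + z6 : ℕ) : Pol) * polar z3 z4 z5 z6 (X 2) (X 0) := by
  have h4 := powD_mul g4 z4
  have h5 := powD_mul g5 z5
  have h6 := powD_mul g6 z6
  have k5 := powD2_mul g5 z5
  have k6 := powD2_mul g6 z6
  simp [pderiv_mul, pderiv_pow_eq, pderiv_powD, pderiv_g3, pderiv_g4, pderiv_g5, pderiv_g6,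
    pderiv_X, polar, -Derivation.leibniz, -Derivation.leibniz_pow]
  generalize powD g4 z4 = D4, powD g5 z5 = D5, powD g6 z6 = D6, powD2 g5 z5 = T5,
    powD2 g6 z6 = T6, g3 ^ z3 = P3, g4 ^ z4 = P4, g5 ^ z5 = P5, g6 ^ z6 = P6 at *
  simp only [g4, g5, g6] at h4 h5 h6 k5 k6
  linear_combination P3 * (X 2 * D5 * P6 + X 0 * P5 * D6) * h4 + P3 * P4 * X 2 * P6 * k5 +
    P3 * P4 * X 0 * D6 * h5 + P3 * P4 * X 2 * D5 * h6 + P3 * P4 * X 0 * P5 * k6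

/-- The analogue of `row_one` for the row `j = 2`. -/
lemma row_two (z3 z4 z5 z6 : ℕ) :
    pderiv 8 (pderiv 4 (g3 ^ z3 * g4 ^ z4 * g5 ^ z5 * g6 ^ z6)) +
      pderiv 9 (pderiv 5 (g3 ^ z3 * g4 ^ z4 * g5 ^ z5 * g6 ^ z6)) =
    ((1 + z4 + z5 + z6 : ℕ) : Pol) * polar z3 z4 z5 z6 (X 3) (X 1) := by
  have h4 := powD_mul g4 z4
  have h5 := powD_mul g5 z5
  have h6 := powD_mul g6 z6
  have k5 := powD2_mul g5 z5
  have k6 := powD2_mul g6 z6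
  simp [pderiv_mul, pderiv_pow_eq, pderiv_powD, pderiv_g3, pderiv_g4, pderiv_g5, pderiv_g6,
    pderiv_X, polar, -Derivation.leibniz, -Derivation.leibniz_pow]
  generalize powD g4 z4 = D4, powD g5 z5 = D5, powD g6 z6 = D6, powD2 g5 z5 = T5,
    powD2 g6 z6 = T6, g3 ^ z3 = P3, g4 ^ z4 = P4, g5 ^ z5 = P5, g6 ^ z6 = P6 at *
  simp only [g4, g5, g6] at h4 h5 h6 k5 k6
  linear_combination P3 * (X 3 * D5 * P6 + X 1 * P5 * D6) * h4 + P3 * P4 * X 3 * P6 * k5 +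
    P3 * P4 * X 1 * D6 * h5 + P3 * P4 * X 3 * D5 * h6 + P3 * P4 * X 1 * P5 * k6

/-- Second half of the computation: the divergence in `b` of the polarisation. Euler's identity
in `b` handles the terms along `b`, while the derivation `Σ_j a_j ∂_{b_j}` kills `g₃` and sends
`g₅` to `g₆`. -/
lemma div_b (z3 z4 z5 z6 : ℕ) :
    pderiv 2 (polar z3 z4 z5 z6 (X 2) (X 0)) + pderiv 3 (polar z3 z4 z5 z6 (X 3) (X 1)) =
      (1 + (z3 : Pol) + (z5 : Pol) + (z6 : Pol)) *
        (powD g5 z5 * (g3 ^ z3 * g4 ^ z4 * g6 ^ z6)) := by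
  have h3 := powD_mul g3 z3
  have h6 := powD_mul g6 z6
  have k5 := powD2_mul g5 z5
  simp [pderiv_mul, pderiv_pow_eq, pderiv_powD, pderiv_g3, pderiv_g4, pderiv_g5, pderiv_g6,
    pderiv_X, polar, -Derivation.leibniz, -Derivation.leibniz_pow]
  generalize powD g3 z3 = D3, powD g5 z5 = D5, powD g6 z6 = D6, powD2 g5 z5 = T5,
    g3 ^ z3 = P3, g4 ^ z4 = P4, g5 ^ z5 = P5, g6 ^ z6 = P6 at *
  simp only [g3, g6, g5] at h3 h6 k5
  linear_combination P4 * D5 * P6 * h3 + P3 * P4 * P6 * k5 + P3 * P4 * D5 * h6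

/-- The analogue of `div_b` with the roles of `a` and `b`, hence of `g₅` and `g₆`, exchanged. -/
lemma div_a (z3 z4 z5 z6 : ℕ) :
    pderiv 0 (polar z3 z4 z5 z6 (X 2) (X 0)) + pderiv 1 (polar z3 z4 z5 z6 (X 3) (X 1)) =
      (1 + (z3 : Pol) + (z5 : Pol) + (z6 : Pol)) *
        (powD g6 z6 * (g3 ^ z3 * g4 ^ z4 * g5 ^ z5)) := by
  have h3 := powD_mul g3 z3
  have h5 := powD_mul g5 z5
  have k6 := powD2_mul g6 z6
  simp [pderiv_mul, pderiv_pow_eq, pderiv_powD, pderiv_g3, pderiv_g4, pderiv_g5, pderiv_g6,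
    pderiv_X, polar, -Derivation.leibniz, -Derivation.leibniz_pow]
  generalize powD g3 z3 = D3, powD g5 z5 = D5, powD g6 z6 = D6, powD2 g6 z6 = T6,
    g3 ^ z3 = P3, g4 ^ z4 = P4, g5 ^ z5 = P5, g6 ^ z6 = P6 at *
  simp only [g3, g5, g6] at h3 h5 k6
  linear_combination P4 * P5 * D6 * h3 + P3 * P4 * P5 * k6 + P3 * P4 * D6 * h5

/-- For each index `i ∈ {5,6}` and all naturals `z₃,z₄,z₅,z₆` with `z_i ≥ 1`,
`E_i(g₃^{z₃}g₄^{z₄}g₅^{z₅}g₆^{z₆}) = z_i (1 + z₄ + z₅ + z₆)(1 + z₃ + z₅ + z₆)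
g_i^{z_i−1} ∏_{j≠i} g_j^{z_j}`. -/
theorem stmt_2 (z3 z4 z5 z6 : ℕ) :
    (1 ≤ z5 →
      E5 (g3 ^ z3 * g4 ^ z4 * g5 ^ z5 * g6 ^ z6) =
        (z5 : Pol) * (1 + (z4 : Pol) + (z5 : Pol) + (z6 : Pol)) *
          (1 + (z3 : Pol) + (z5 : Pol) + (z6 : Pol)) *
          g5 ^ (z5 - 1) * (g3 ^ z3 * g4 ^ z4 * g6 ^ z6)) ∧
    (1 ≤ z6 →
      E6 (g3 ^ z3 * g4 ^ z4 * g5 ^ z5 * g6 ^ z6) =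
        (z6 : Pol) * (1 + (z4 : Pol) + (z5 : Pol) + (z6 : Pol)) *
          (1 + (z3 : Pol) + (z5 : Pol) + (z6 : Pol)) *
          g6 ^ (z6 - 1) * (g3 ^ z3 * g4 ^ z4 * g5 ^ z5)) := by
  refine ⟨fun _ => ?_, fun _ => ?_⟩
  · have h : ∀ p, E5 p = pderiv 2 (pderiv 6 (pderiv 4 p) + pderiv 7 (pderiv 5 p)) +
        pderiv 3 (pderiv 8 (pderiv 4 p) + pderiv 9 (pderiv 5 p)) := fun p => by
      simp only [E5, map_add]
      ring
    have hd := div_b z3 z4 z5 z6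
    rw [h, row_one, row_two, pderiv_mul, pderiv_mul, Derivation.map_natCast,
      Derivation.map_natCast]
    simp only [powD] at hd
    push_cast
    linear_combination (1 + (z4 : Pol) + z5 + z6) * hd
  · have h : ∀ p, E6 p = pderiv 0 (pderiv 6 (pderiv 4 p) + pderiv 7 (pderiv 5 p)) +
        pderiv 1 (pderiv 8 (pderiv 4 p) + pderiv 9 (pderiv 5 p)) := fun p => by
      simp only [E6, map_add]
      ring
    have hd := div_a z3 z4 z5 z6
    rw [h, row_one, row_two, pderiv_mul, pderiv_mul, Derivation.map_natCast,
      Derivation.map_natCast]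
    simp only [powD] at hd
    push_cast
    linear_combination (1 + (z4 : Pol) + z5 + z6) * hd

end Stmt2
end

section
/- Adjoin three further variables x₀, x₁, x₂, set f = x₀·x₁·x₂·f₃·f₄·f₅, and let D = ∂_{x₀}∂_{x₁}∂_{x₂}∘D₃∘D₄∘D₅. Then there is a nonzero constant c such that for every integer n ≥ 1, D(fⁿ) = c·n⁷·(3n − 1)·(3n + 1)·f^{n−1}. (This is the b-function identity for the rank-one stable grading of type (E₆, 9ₛ) at the trivial character: b(s) = s⁷(s − 1/3)(s + 1/3) up to a constant, with b_exp(z) = Φ₁⁷Φ₃.) -/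
/-!
Each of the three operators lowers one exponent of a monomial in `f₃, f₄, f₅`:
for every `u` that does not involve the `a`, `b`, `c` variables,

* `D₅ (u f₃ⁱ f₄ʲ f₅ᵏ) = k (i + j + k + 1) u f₃ⁱ f₄ʲ f₅ᵏ⁻¹`,

and likewise for `D₄` (with factor `j`) and `D₃` (with factor `i`). For `D₅ = ⟨∂_a, ∂_c⟩` this
holds because `⟨∂_a, ∂_c⟩ f₅ = 2` and the pairings of the gradients are
`⟨∂_a f₅, ∂_c f₅⟩ = ⟨c, a⟩ = f₅`, `⟨∂_a f₄, ∂_c f₅⟩ = ⟨b, a⟩ = f₄`, `⟨∂_a f₅, ∂_c f₃⟩ = f₃` and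
`⟨∂_a f₄, ∂_c f₃⟩ = 0`, while `∂_a f₃ = 0` and `∂_c f₄ = 0`.
Starting from `i = j = k = n`, the successive factors for `D₅`, `D₄`, `D₃` are
`n (3n + 1)`, `n · 3n`, `n (3n − 1)`, and the derivatives in `x₀, x₁, x₂` contribute `n³`; hence `c = 3`.
-/

/-!
Variables (`Fin 9`): `0 ↦ a₁`, `1 ↦ a₂`, `2 ↦ b₁`, `3 ↦ b₂`, `4 ↦ c₁`, `5 ↦ c₂`,
`6 ↦ x₀`, `7 ↦ x₁`, `8 ↦ x₂`.
We set `f₃ = b₁c₂ − b₂c₁`, `f₄ = a₁b₁ + a₂b₂`, `f₅ = a₁c₁ + a₂c₂`,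
`f = x₀x₁x₂f₃f₄f₅`, and `D = ∂_{x₀}∂_{x₁}∂_{x₂}∘D₃∘D₄∘D₅` with
`D₃ = ∂_{b₁}∂_{c₂} − ∂_{b₂}∂_{c₁}`, `D₄ = ∂_{a₁}∂_{b₁} + ∂_{a₂}∂_{b₂}`,
`D₅ = ∂_{a₁}∂_{c₁} + ∂_{a₂}∂_{c₂}`.
-/

open MvPolynomial

namespace Stmt3

abbrev Pol := MvPolynomial (Fin 9) ℚ

noncomputable def f3 : Pol := X 2 * X 5 - X 3 * X 4
noncomputable def f4 : Pol := X 0 * X 2 + X 1 * X 3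
noncomputable def f5 : Pol := X 0 * X 4 + X 1 * X 5

noncomputable def D3 (p : Pol) : Pol := pderiv 2 (pderiv 5 p) - pderiv 3 (pderiv 4 p)
noncomputable def D4 (p : Pol) : Pol := pderiv 0 (pderiv 2 p) + pderiv 1 (pderiv 3 p)
noncomputable def D5 (p : Pol) : Pol := pderiv 0 (pderiv 4 p) + pderiv 1 (pderiv 5 p)

noncomputable def f : Pol := X 6 * X 7 * X 8 * f3 * f4 * f5

noncomputable def D (p : Pol) : Pol := pderiv 6 (pderiv 7 (pderiv 8 (D3 (D4 (D5 p)))))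

/-- `D₅` lowers the exponent of `f₅`. The hypothesis `hu` says that `u` is constant in the
`a`, `b`, `c` variables (indices below `6`). -/
theorem D5_mul_pow (u : Pol) (hu : ∀ s : Fin 9, s.val < 6 → pderiv s u = 0) (i j k : ℕ) :
    D5 (u * f3 ^ i * f4 ^ j * f5 ^ (k + 1)) =
      u * ((k + 1) * (i + j + k + 2)) * f3 ^ i * f4 ^ j * f5 ^ k := by
  have h0 := hu 0 (by decide)
  have h1 := hu 1 (by decide)
  have h4 := hu 4 (by decide)
  have h5 := hu 5 (by decide)
  -- Case splits on the exponents remove the truncated subtractions in `∂(pⁱ) = i pⁱ⁻¹ ∂p`.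
  rcases i with _ | i <;> rcases j with _ | j <;> rcases k with _ | k <;>
    simp [D5, f3, f4, f5, pderiv_X, Derivation.leibniz, Derivation.leibniz_pow,
      h0, h1, h4, h5] <;> ring

theorem D4_mul_pow (u : Pol) (hu : ∀ s : Fin 9, s.val < 6 → pderiv s u = 0) (i j k : ℕ) :
    D4 (u * f3 ^ i * f4 ^ (j + 1) * f5 ^ k) =
      u * ((j + 1) * (i + j + k + 2)) * f3 ^ i * f4 ^ j * f5 ^ k := by
  have h0 := hu 0 (by decide)
  have h1 := hu 1 (by decide)
  have h2 := hu 2 (by decide)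
  have h3 := hu 3 (by decide)
  -- Case splits on the exponents remove the truncated subtractions in `∂(pⁱ) = i pⁱ⁻¹ ∂p`.
  rcases i with _ | i <;> rcases j with _ | j <;> rcases k with _ | k <;>
    simp [D4, f3, f4, f5, pderiv_X, Derivation.leibniz, Derivation.leibniz_pow,
      h0, h1, h2, h3] <;> ring

theorem D3_mul_pow (u : Pol) (hu : ∀ s : Fin 9, s.val < 6 → pderiv s u = 0) (i j k : ℕ) :
    D3 (u * f3 ^ (i + 1) * f4 ^ j * f5 ^ k) =
      u * ((i + 1) * (i + j + k + 2)) * f3 ^ i * f4 ^ j * f5 ^ k := by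
  have h2 := hu 2 (by decide)
  have h3 := hu 3 (by decide)
  have h4 := hu 4 (by decide)
  have h5 := hu 5 (by decide)
  -- Case splits on the exponents remove the truncated subtractions in `∂(pⁱ) = i pⁱ⁻¹ ∂p`.
  rcases i with _ | i <;> rcases j with _ | j <;> rcases k with _ | k <;>
    simp [D3, f3, f4, f5, pderiv_X, Derivation.leibniz, Derivation.leibniz_pow,
      h2, h3, h4, h5] <;> ring

/-- There is a nonzero constant `c` such that for every integer `n ≥ 1`,
`D(fⁿ) = c · n⁷ · (3n − 1) · (3n + 1) · f^{n−1}`: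
the b-function identity for the rank-one stable grading of type `(E₆, 9ₛ)`
at the trivial character, `b(s) = s⁷(s − 1/3)(s + 1/3)` up to a constant. -/
theorem stmt_3 :
    ∃ c : ℚ, c ≠ 0 ∧ ∀ n : ℕ, 1 ≤ n →
      D (f ^ n) =
        C c * (n : Pol) ^ 7 * (3 * (n : Pol) - 1) * (3 * (n : Pol) + 1) * f ^ (n - 1) := by
  refine ⟨3, by norm_num, fun n hn => ?_⟩
  obtain ⟨m, rfl⟩ := Nat.exists_eq_add_of_le' hn
  set u : Pol := (X 6 * X 7 * X 8) ^ (m + 1) with hu_def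
  have hu : ∀ s : Fin 9, s.val < 6 → pderiv s u = 0 := by
    intro s hs
    have h6 : (6 : Fin 9) ≠ s := by rintro rfl; simp at hs
    have h7 : (7 : Fin 9) ≠ s := by rintro rfl; simp at hs
    have h8 : (8 : Fin 9) ≠ s := by rintro rfl; simp at hs
    simp [hu_def, Derivation.leibniz, Derivation.leibniz_pow, pderiv_X_of_ne h6,
      pderiv_X_of_ne h7, pderiv_X_of_ne h8]
  have hconst : ∀ (c : ℕ) (s : Fin 9), s.val < 6 → pderiv s (u * (c : Pol)) = 0 := by
    intro c s hs
    simp [Derivation.leibniz, hu s hs]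
  have hf : f ^ (m + 1) = u * f3 ^ (m + 1) * f4 ^ (m + 1) * f5 ^ (m + 1) := by
    rw [hu_def, f]; ring
  have e5 := D5_mul_pow u hu (m + 1) (m + 1) m
  have e4 := D4_mul_pow (u * ((m + 1) * (3 * m + 4) : ℕ)) (hconst _) (m + 1) m m
  have e3 := D3_mul_pow (u * ((m + 1) * (3 * m + 4) * ((m + 1) * (3 * m + 3)) : ℕ)) (hconst _) m m m
  have e : D3 (D4 (D5 (f ^ (m + 1)))) =
      ((3 * (m + 1) ^ 4 * (3 * m + 2) * (3 * m + 4) : ℕ) : Pol) *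
      (X 6 ^ (m + 1) * X 7 ^ (m + 1) * X 8 ^ (m + 1)) * (f3 ^ m * f4 ^ m * f5 ^ m) := by
    rw [hf, e5]
    refine (congrArg (fun p => D3 (D4 p)) (?_ : _ = u * ((m + 1) * (3 * m + 4) : ℕ) *
      f3 ^ (m + 1) * f4 ^ (m + 1) * f5 ^ m)).trans ?_
    · push_cast; ring
    rw [e4]
    refine (congrArg D3 (?_ : _ = u * ((m + 1) * (3 * m + 4) * ((m + 1) * (3 * m + 3)) : ℕ) *
      f3 ^ (m + 1) * f4 ^ m * f5 ^ m)).trans ?_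
    · push_cast; ring
    rw [e3, hu_def]
    push_cast; ring
  have hx : ∀ K : ℕ, pderiv 6 (pderiv 7 (pderiv 8 ((K : Pol) *
      (X 6 ^ (m + 1) * X 7 ^ (m + 1) * X 8 ^ (m + 1)) * (f3 ^ m * f4 ^ m * f5 ^ m)))) =
      (K : Pol) * ((m : Pol) + 1) ^ 3 * (X 6 * X 7 * X 8 * f3 * f4 * f5) ^ m := by
    intro K
    simp only [mul_pow]
    simp [f3, f4, f5, pderiv_X, Derivation.leibniz, Derivation.leibniz_pow]
    ring
  have hC : (C 3 : Pol) = 3 := map_ofNat C 3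
  rw [D, e, hx, hC, ← f, Nat.add_sub_cancel]
  push_cast
  ring

end Stmt3
end

section
/- Adjoin four further variables x₀, x₁, x₂, x₃, set f = x₀·x₁²·x₂²·f₃·f₄·f₅²·x₃, and let D = ∂_{x₀}∂_{x₁}²∂_{x₂}²∘D₃∘D₄∘D₅²∘∂_{x₃}. Then there is a nonzero constant c such that for every integer n ≥ 1, D(fⁿ) = c·n⁸·(2n − 1)⁴·(4n − 1)·(4n + 1)·f^{n−1}. (This is the b-function identity for the rank-one stable grading of type (E₇, 14ₛ) at the trivial character: b(s) = s⁸(s − 1/2)⁴(s − 1/4)(s + 1/4) up to a constant, with b_exp(z) = Φ₁⁸Φ₂⁴Φ₄.) -/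
/-!
The powers `f₃ᵃ f₄ᵇ f₅ᶜ` are relative invariants of a prehomogeneous action of
`GL₂ × GL₁³` on triples of plane vectors, and each of `D₃`, `D₄`, `D₅` lowers the exponent of the
corresponding `fᵢ` by one, with scalar (exponent) · (`a + b + c + 1`). For `D₅` this
is seen directly: writing `F = f₃ᵃ f₄ᵇ f₅ᶜ` and `c⃗ = (c₁, c₂)`, the gradient of `F` in `c⃗` is
`c · (F/f₅) a⃗ + a · (F/f₃) J b⃗`, where `J b⃗ = (-b₂, b₁)`. The divergence in `a⃗` of the
first term is `c (b + c + 1) F/f₅` by Euler's formula, and that of the second is `a c F/f₅`,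
since `J b⃗` is orthogonal to `b⃗` and `J b⃗ · c⃗ = f₃`. The three formulas are `D3_apply`,
`D4_apply` and `D5_apply`, stated with exponents shifted by one.

Starting from the exponents `(n, n, 2n)`, the successive scalars are `2n(4n + 1)` and
`(2n - 1)(4n)` for `D₅` twice, `n(4n - 1)` for `D₄`, and `n(4n - 2)` for `D₃`. The derivatives in the
`xᵢ` contribute `n · n · (2n(2n - 1))²`. The product is
`64 n⁸ (2n - 1)⁴ (4n - 1)(4n + 1)`, so `c = 64`.
-/


/-!
Variables (`Fin 10`): `0 ↦ a₁`, `1 ↦ a₂`, `2 ↦ b₁`, `3 ↦ b₂`, `4 ↦ c₁`, `5 ↦ c₂`,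
`6 ↦ x₀`, `7 ↦ x₁`, `8 ↦ x₂`, `9 ↦ x₃`.
We set `f₃ = b₁c₂ − b₂c₁`, `f₄ = a₁b₁ + a₂b₂`, `f₅ = a₁c₁ + a₂c₂`,
`f = x₀·x₁²·x₂²·f₃·f₄·f₅²·x₃`, and `D = ∂_{x₀}∂_{x₁}²∂_{x₂}²∘D₃∘D₄∘D₅²∘∂_{x₃}` with
`D₃ = ∂_{b₁}∂_{c₂} − ∂_{b₂}∂_{c₁}`, `D₄ = ∂_{a₁}∂_{b₁} + ∂_{a₂}∂_{b₂}`,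
`D₅ = ∂_{a₁}∂_{c₁} + ∂_{a₂}∂_{c₂}`.
-/

open MvPolynomial

namespace Stmt4

abbrev Pol := MvPolynomial (Fin 10) ℚ

noncomputable def f3 : Pol := X 2 * X 5 - X 3 * X 4
noncomputable def f4 : Pol := X 0 * X 2 + X 1 * X 3
noncomputable def f5 : Pol := X 0 * X 4 + X 1 * X 5

noncomputable def D3 (p : Pol) : Pol := pderiv 2 (pderiv 5 p) - pderiv 3 (pderiv 4 p)
noncomputable def D4 (p : Pol) : Pol := pderiv 0 (pderiv 2 p) + pderiv 1 (pderiv 3 p)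
noncomputable def D5 (p : Pol) : Pol := pderiv 0 (pderiv 4 p) + pderiv 1 (pderiv 5 p)

noncomputable def f : Pol := X 6 * X 7 ^ 2 * X 8 ^ 2 * f3 * f4 * f5 ^ 2 * X 9

noncomputable def D (p : Pol) : Pol :=
  pderiv 6 (pderiv 7 (pderiv 7 (pderiv 8 (pderiv 8 (D3 (D4 (D5 (D5 (pderiv 9 p)))))))))

/-- A polynomial is free of `a₁, a₂, b₁, b₂, c₁, c₂` when its partial derivatives in these six
variables vanish; such a polynomial is a scalar for `D₃`, `D₄` and `D₅`. -/
def Free (q : Pol) : Prop :=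
  pderiv 0 q = 0 ∧ pderiv 1 q = 0 ∧ pderiv 2 q = 0 ∧
    pderiv 3 q = 0 ∧ pderiv 4 q = 0 ∧ pderiv 5 q = 0

lemma Free.natCast_mul {q : Pol} (hq : Free q) (m : ℕ) : Free ((m : Pol) * q) := by
  obtain ⟨h0, h1, h2, h3, h4, h5⟩ := hq
  simp [Free, Derivation.leibniz, h0, h1, h2, h3, h4, h5]

lemma free_monomial (i j k l : ℕ) : Free (X 6 ^ i * X 7 ^ j * X 8 ^ k * X 9 ^ l) := by
  simp [Free, Derivation.leibniz, Derivation.leibniz_pow, pderiv_X]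

/-- The action of `D₅`. The case split on whether each exponent vanishes lets the truncated
exponents of the power rule simplify. -/
lemma D5_apply {q : Pol} (hq : Free q) (a b c : ℕ) :
    D5 (q * (f3 ^ a * f4 ^ b * f5 ^ (c + 1))) =
      ((((c + 1) * (a + b + c + 2) : ℕ) : Pol) * q) * (f3 ^ a * f4 ^ b * f5 ^ c) := by
  obtain ⟨h0, h1, _, _, h4, h5⟩ := hq
  rcases a with _ | a <;> rcases b with _ | b <;> rcases c with _ | c <;>
  · simp [D5, f3, f4, f5, Derivation.leibniz, Derivation.leibniz_pow, h0, h1, h4, h5,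
      pderiv_X]
    try ring

lemma D4_apply {q : Pol} (hq : Free q) (a b c : ℕ) :
    D4 (q * (f3 ^ a * f4 ^ (b + 1) * f5 ^ c)) =
      ((((b + 1) * (a + b + c + 2) : ℕ) : Pol) * q) * (f3 ^ a * f4 ^ b * f5 ^ c) := by
  obtain ⟨h0, h1, h2, h3, _, _⟩ := hq
  rcases a with _ | a <;> rcases b with _ | b <;> rcases c with _ | c <;>
  · simp [D4, f3, f4, f5, Derivation.leibniz, Derivation.leibniz_pow, h0, h1, h2, h3,
      pderiv_X]
    try ring

lemma D3_apply {q : Pol} (hq : Free q) (a b c : ℕ) :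
    D3 (q * (f3 ^ (a + 1) * f4 ^ b * f5 ^ c)) =
      ((((a + 1) * (a + b + c + 2) : ℕ) : Pol) * q) * (f3 ^ a * f4 ^ b * f5 ^ c) := by
  obtain ⟨_, _, h2, h3, h4, h5⟩ := hq
  rcases a with _ | a <;> rcases b with _ | b <;> rcases c with _ | c <;>
  · simp [D3, f3, f4, f5, Derivation.leibniz, Derivation.leibniz_pow, h2, h3, h4, h5,
      pderiv_X]
    try ring

lemma pderiv_X_pow_mul {i : Fin 10} {p : Pol} (hp : pderiv i p = 0) (m : ℕ) :
    pderiv i (X i ^ (m + 1) * p) = ((m + 1 : ℕ) : Pol) * (X i ^ m * p) := by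
  simp [Derivation.leibniz, Derivation.leibniz_pow, hp]
  ring

lemma pderiv_natCast_mul (i : Fin 10) (m : ℕ) (p : Pol) :
    pderiv i ((m : Pol) * p) = (m : Pol) * pderiv i p := by
  simp [Derivation.leibniz]

lemma pderiv_pderiv_X_pow_mul {i : Fin 10} {p : Pol} (hp : pderiv i p = 0) (m : ℕ) :
    pderiv i (pderiv i (X i ^ (m + 2) * p)) =
      (((m + 2) * (m + 1) : ℕ) : Pol) * (X i ^ m * p) := by
  have hp' : pderiv i (((m + 2 : ℕ) : Pol) * p) = 0 := by
    rw [pderiv_natCast_mul, hp, mul_zero]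
  rw [pderiv_X_pow_mul hp, mul_left_comm, pderiv_X_pow_mul hp']
  push_cast
  ring

/-- The action of `∂_{x₀} ∂_{x₁}² ∂_{x₂}²` on a monomial in `x₀, x₁, x₂` times a polynomial not
involving these variables. -/
lemma pderiv_x_part {p : Pol} (h6 : pderiv 6 p = 0) (h7 : pderiv 7 p = 0)
    (h8 : pderiv 8 p = 0) (i j k : ℕ) :
    pderiv 6 (pderiv 7 (pderiv 7 (pderiv 8 (pderiv 8
      (X 8 ^ (k + 2) * (X 7 ^ (j + 2) * (X 6 ^ (i + 1) * p))))))) =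
    (((k + 2) * (k + 1) * ((j + 2) * (j + 1)) * (i + 1) : ℕ) : Pol) *
      (X 8 ^ k * (X 7 ^ j * (X 6 ^ i * p))) := by
  have e8 : pderiv 8 (X 7 ^ (j + 2) * (X 6 ^ (i + 1) * p)) = 0 := by
    simp [Derivation.leibniz, Derivation.leibniz_pow, pderiv_X, h8]
  have e7 : pderiv 7 ((((k + 2) * (k + 1) : ℕ) : Pol) * (X 8 ^ k * (X 6 ^ (i + 1) * p))) = 0 := by
    rw [pderiv_natCast_mul]
    simp [Derivation.leibniz, Derivation.leibniz_pow, pderiv_X, h7]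
  have e6 : pderiv 6 ((((k + 2) * (k + 1) * ((j + 2) * (j + 1)) : ℕ) : Pol) *
      (X 8 ^ k * (X 7 ^ j * p))) = 0 := by
    rw [pderiv_natCast_mul]
    simp [Derivation.leibniz, Derivation.leibniz_pow, pderiv_X, h6]
  rw [pderiv_pderiv_X_pow_mul e8]
  -- Before each differentiation, the power of the active variable is moved to the front.
  rw [show (((k + 2) * (k + 1) : ℕ) : Pol) * (X 8 ^ k * (X 7 ^ (j + 2) * (X 6 ^ (i + 1) * p))) =
      X 7 ^ (j + 2) * ((((k + 2) * (k + 1) : ℕ) : Pol) * (X 8 ^ k * (X 6 ^ (i + 1) * p))) by ring,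
    pderiv_pderiv_X_pow_mul e7]
  rw [show (((j + 2) * (j + 1) : ℕ) : Pol) * (X 7 ^ j *
      ((((k + 2) * (k + 1) : ℕ) : Pol) * (X 8 ^ k * (X 6 ^ (i + 1) * p)))) =
      X 6 ^ (i + 1) * ((((k + 2) * (k + 1) * ((j + 2) * (j + 1)) : ℕ) : Pol) *
        (X 8 ^ k * (X 7 ^ j * p))) by push_cast; ring,
    pderiv_X_pow_mul e6]
  push_cast
  ring

/-- There is a nonzero constant `c` such that for every integer `n ≥ 1`,
`D(fⁿ) = c · n⁸ · (2n − 1)⁴ · (4n − 1) · (4n + 1) · f^{n−1}`: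
the b-function identity for the rank-one stable grading of type `(E₇, 14ₛ)`
at the trivial character, `b(s) = s⁸(s − 1/2)⁴(s − 1/4)(s + 1/4)` up to a constant. -/
theorem stmt_4 :
    ∃ c : ℚ, c ≠ 0 ∧ ∀ n : ℕ, 1 ≤ n →
      D (f ^ n) =
        C c * (n : Pol) ^ 8 * (2 * (n : Pol) - 1) ^ 4 *
          (4 * (n : Pol) - 1) * (4 * (n : Pol) + 1) * f ^ (n - 1) := by
  refine ⟨64, by norm_num, fun n hn => ?_⟩
  obtain ⟨k, rfl⟩ : ∃ k, n = k + 1 := ⟨n - 1, by omega⟩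
  have e9 : pderiv 9 (f ^ (k + 1)) =
      (((k + 1 : ℕ) : Pol) * (X 6 ^ (k + 1) * X 7 ^ (2 * k + 2) * X 8 ^ (2 * k + 2) * X 9 ^ k)) *
        (f3 ^ (k + 1) * f4 ^ (k + 1) * f5 ^ (2 * k + 1 + 1)) := by
    have hf : f ^ (k + 1) = X 9 ^ (k + 1) *
        (X 6 ^ (k + 1) * X 7 ^ (2 * k + 2) * X 8 ^ (2 * k + 2) *
          (f3 ^ (k + 1) * f4 ^ (k + 1) * f5 ^ (2 * k + 1 + 1))) := by
      simp only [f]; ring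
    rw [hf, pderiv_X_pow_mul]
    · ring
    · simp [f3, f4, f5, Derivation.leibniz, Derivation.leibniz_pow, pderiv_X]
  -- The scalars produced by `D₅`, `D₅`, `D₄` join the coefficient, which stays free of
  -- the vector variables.
  have h1 := (free_monomial (k + 1) (2 * k + 2) (2 * k + 2) k).natCast_mul (k + 1)
  have h2 := h1.natCast_mul ((2 * k + 1 + 1) * ((k + 1) + (k + 1) + (2 * k + 1) + 2))
  have h3 := h2.natCast_mul ((2 * k + 1) * ((k + 1) + (k + 1) + 2 * k + 2))
  have h4 := h3.natCast_mul ((k + 1) * ((k + 1) + k + 2 * k + 2))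
  rw [D, e9, D5_apply h1, D5_apply h2, D4_apply h3, D3_apply h4]
  set p : Pol := X 9 ^ k * (f3 ^ k * f4 ^ k * f5 ^ (2 * k)) with hp
  set N : ℕ := (k + 1) * (k + k + 2 * k + 2) * ((k + 1) * ((k + 1) + k + 2 * k + 2) *
    ((2 * k + 1) * ((k + 1) + (k + 1) + 2 * k + 2) *
      ((2 * k + 1 + 1) * ((k + 1) + (k + 1) + (2 * k + 1) + 2) * (k + 1)))) with hN
  have h6 : pderiv 6 ((N : Pol) * p) = 0 := by
    simp [hp, f3, f4, f5, Derivation.leibniz, Derivation.leibniz_pow, pderiv_X]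
  have h7 : pderiv 7 ((N : Pol) * p) = 0 := by
    simp [hp, f3, f4, f5, Derivation.leibniz, Derivation.leibniz_pow, pderiv_X]
  have h8 : pderiv 8 ((N : Pol) * p) = 0 := by
    simp [hp, f3, f4, f5, Derivation.leibniz, Derivation.leibniz_pow, pderiv_X]
  have key := pderiv_x_part h6 h7 h8 k (2 * k) (2 * k)
  have h64 : (C 64 : Pol) = 64 := map_ofNat C 64
  calc _ = pderiv 6 (pderiv 7 (pderiv 7 (pderiv 8 (pderiv 8 (X 8 ^ (2 * k + 2) *
          (X 7 ^ (2 * k + 2) * (X 6 ^ (k + 1) * ((N : Pol) * p)))))))) := by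
        congr 5
        rw [hp, hN]
        push_cast
        ring
    _ = _ := by
        rw [key, hp, hN, h64, Nat.add_sub_cancel]
        simp only [f]
        push_cast
        ring

end Stmt4
end

section
/- Adjoin five further variables x₀, x₁, x₂, x₃, x₄, set f = x₀·x₁²·x₂⁴·x₃³·x₄²·f₄·f₃²·f₅³, and let D = ∂_{x₀}∂_{x₁}²∂_{x₂}⁴∂_{x₃}³∂_{x₄}²∘D₄∘D₃²∘D₅³. Then there is a nonzero constant c such that for every integer n ≥ 1, D(fⁿ) = c·n⁹·(2n − 1)⁵·(4n − 1)·(4n − 3)·(3n − 1)³·(3n − 2)³·(6n − 1)·(6n + 1)·f^{n−1}. (This is the b-function identity for the rank-one stable grading of type (E₈, 24ₛ), with b_exp(z) = Φ₁⁹Φ₂⁵Φ₃³Φ₄Φ₆.) -/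
/-!
Put `m(p, q, r) = f₃ᵖ f₄^q f₅ʳ`. Each quadratic operator lowers one exponent, up to a scalar:
with `s = p + q + r`,
`D₅ m(p, q, r) = r (s + 1) m(p, q, r - 1)`, `D₄ m(p, q, r) = q (s + 1) m(p, q - 1, r)` and
`D₃ m(p, q, r) = p (s + 1) m(p - 1, q, r)`.
For `D₅ = ∂ₐ · ∂_c` this holds because `∂_c f₃ = (-b₂, b₁)` is orthogonal to `∂ₐ f₄ = b` and pairs
with `∂ₐ f₅ = c` to `f₃`, while `∂_c f₅ = a` pairs with `∂ₐ f₄` and `∂ₐ f₅` to `f₄` and `f₅` and has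
divergence `2`; the coefficient is `r (p + q + (r - 1) + 2)`. The other two cases are the same
up to a linear change of coordinates.

Starting from `fⁿ`, where `(p, q, r) = (2n, n, 3n)`, the operators `D₅³`, `D₃²`, `D₄` contribute
`3n(3n-1)(3n-2) · 2n(2n-1) · n` times the product of `s + 1` over `s = 6n, …, 6n - 5`, and the
derivatives in the `xᵢ` contribute falling factorials of `n, 2n, 4n, 3n, 2n`. Collecting the
factors gives the asserted polynomial with `c = 41472`. The lemmas `D3_mono`, `D4_mono`, `D5_mono`
and `pderiv6_mono`, …, `pderiv10_mono` are these one-step formulas.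
-/


/-!
Variables (`Fin 11`): `0 ↦ a₁`, `1 ↦ a₂`, `2 ↦ b₁`, `3 ↦ b₂`, `4 ↦ c₁`, `5 ↦ c₂`,
`6 ↦ x₀`, `7 ↦ x₁`, `8 ↦ x₂`, `9 ↦ x₃`, `10 ↦ x₄`.
We set `f₃ = b₁c₂ − b₂c₁`, `f₄ = a₁b₁ + a₂b₂`, `f₅ = a₁c₁ + a₂c₂`,
`f = x₀·x₁²·x₂⁴·x₃³·x₄²·f₄·f₃²·f₅³`, and
`D = ∂_{x₀}∂_{x₁}²∂_{x₂}⁴∂_{x₃}³∂_{x₄}²∘D₄∘D₃²∘D₅³` with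
`D₃ = ∂_{b₁}∂_{c₂} − ∂_{b₂}∂_{c₁}`, `D₄ = ∂_{a₁}∂_{b₁} + ∂_{a₂}∂_{b₂}`,
`D₅ = ∂_{a₁}∂_{c₁} + ∂_{a₂}∂_{c₂}`.
-/

open MvPolynomial

namespace Stmt5

abbrev Pol := MvPolynomial (Fin 11) ℚ

noncomputable def f3 : Pol := X 2 * X 5 - X 3 * X 4
noncomputable def f4 : Pol := X 0 * X 2 + X 1 * X 3
noncomputable def f5 : Pol := X 0 * X 4 + X 1 * X 5

noncomputable def D3 (p : Pol) : Pol := pderiv 2 (pderiv 5 p) - pderiv 3 (pderiv 4 p)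
noncomputable def D4 (p : Pol) : Pol := pderiv 0 (pderiv 2 p) + pderiv 1 (pderiv 3 p)
noncomputable def D5 (p : Pol) : Pol := pderiv 0 (pderiv 4 p) + pderiv 1 (pderiv 5 p)

noncomputable def f : Pol :=
  X 6 * X 7 ^ 2 * X 8 ^ 4 * X 9 ^ 3 * X 10 ^ 2 * f4 * f3 ^ 2 * f5 ^ 3

noncomputable def D (p : Pol) : Pol :=
  pderiv 6 (pderiv 7 (pderiv 7 (pderiv 8 (pderiv 8 (pderiv 8 (pderiv 8 (pderiv 9 (pderiv 9 (pderiv 9 (pderiv 10 (pderiv 10 (D4 (D3 (D3 (D5 (D5 (D5 (p))))))))))))))))))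

/-- The product `x₀^i x₁^j x₂^k x₃^l x₄^t f₃^p f₄^q f₅^r`. -/
noncomputable def mono (i j k l t p q r : ℕ) : Pol :=
  X 6 ^ i * X 7 ^ j * X 8 ^ k * X 9 ^ l * X 10 ^ t * (f3 ^ p * f4 ^ q * f5 ^ r)

theorem pderiv6_mono (a : ℚ) (i j k l t p q r : ℕ) :
    pderiv 6 (C a * mono (i + 1) j k l t p q r) =
      C (a * (i + 1)) * mono i j k l t p q r := by
  simp [mono, f3, f4, f5, pderiv_X]
  ring

theorem pderiv7_mono (a : ℚ) (i j k l t p q r : ℕ) :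
    pderiv 7 (C a * mono i (j + 1) k l t p q r) =
      C (a * (j + 1)) * mono i j k l t p q r := by
  simp [mono, f3, f4, f5, pderiv_X]
  ring

theorem pderiv8_mono (a : ℚ) (i j k l t p q r : ℕ) :
    pderiv 8 (C a * mono i j (k + 1) l t p q r) =
      C (a * (k + 1)) * mono i j k l t p q r := by
  simp [mono, f3, f4, f5, pderiv_X]
  ring

theorem pderiv9_mono (a : ℚ) (i j k l t p q r : ℕ) :
    pderiv 9 (C a * mono i j k (l + 1) t p q r) =
      C (a * (l + 1)) * mono i j k l t p q r := by
  simp [mono, f3, f4, f5, pderiv_X]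
  ring

theorem pderiv10_mono (a : ℚ) (i j k l t p q r : ℕ) :
    pderiv 10 (C a * mono i j k l (t + 1) p q r) =
      C (a * (t + 1)) * mono i j k l t p q r := by
  simp [mono, f3, f4, f5, pderiv_X]
  ring

theorem D3_mono (a : ℚ) (i j k l t p q r : ℕ) :
    D3 (C a * mono i j k l t (p + 1) q r) =
      C (a * (p + 1) * (p + q + r + 2)) * mono i j k l t p q r := by
  -- Splitting on zero exponents removes the truncated exponents `p - 1`, `q - 1`, `r - 1`.
  rcases p with _ | p <;> rcases q with _ | q <;> rcases r with _ | r <;>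
  · simp [D3, mono, f3, f4, f5, pderiv_X, map_ofNat]
    ring

theorem D4_mono (a : ℚ) (i j k l t p q r : ℕ) :
    D4 (C a * mono i j k l t p (q + 1) r) =
      C (a * (q + 1) * (p + q + r + 2)) * mono i j k l t p q r := by
  -- Splitting on zero exponents removes the truncated exponents `p - 1`, `q - 1`, `r - 1`.
  rcases p with _ | p <;> rcases q with _ | q <;> rcases r with _ | r <;>
  · simp [D4, mono, f3, f4, f5, pderiv_X, map_ofNat]
    ring

theorem D5_mono (a : ℚ) (i j k l t p q r : ℕ) :
    D5 (C a * mono i j k l t p q (r + 1)) =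
      C (a * (r + 1) * (p + q + r + 2)) * mono i j k l t p q r := by
  -- Splitting on zero exponents removes the truncated exponents `p - 1`, `q - 1`, `r - 1`.
  rcases p with _ | p <;> rcases q with _ | q <;> rcases r with _ | r <;>
  · simp [D5, mono, f3, f4, f5, pderiv_X, map_ofNat]
    ring

theorem f_pow (n : ℕ) :
    f ^ n = mono n (2 * n) (4 * n) (3 * n) (2 * n) (2 * n) n (3 * n) := by
  simp only [f, mono, mul_pow, ← pow_mul]
  ring

/-- There is a nonzero constant `c` such that for every integer `n ≥ 1`,
`D(fⁿ) = c·n⁹·(2n−1)⁵·(4n−1)·(4n−3)·(3n−1)³·(3n−2)³·(6n−1)·(6n+1)·f^{n−1}`: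
the b-function identity for the rank-one stable grading of type `(E₈, 24ₛ)`,
with `b_exp(z) = Φ₁⁹Φ₂⁵Φ₃³Φ₄Φ₆`. -/
theorem stmt_5 :
    ∃ c : ℚ, c ≠ 0 ∧ ∀ n : ℕ, 1 ≤ n →
      D (f ^ n) =
        C c * (n : Pol) ^ 9 * (2 * (n : Pol) - 1) ^ 5 *
          (4 * (n : Pol) - 1) * (4 * (n : Pol) - 3) *
          (3 * (n : Pol) - 1) ^ 3 * (3 * (n : Pol) - 2) ^ 3 *
          (6 * (n : Pol) - 1) * (6 * (n : Pol) + 1) * f ^ (n - 1) := by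
  refine ⟨41472, by norm_num, fun n hn => ?_⟩
  obtain ⟨m, rfl⟩ : ∃ m, n = m + 1 := ⟨n - 1, by omega⟩
  -- Exponents are written as iterated successors so that the one-step formulas apply.
  have h : f ^ (m + 1) = C 1 * mono (m + 1) (2 * m + 1 + 1) (4 * m + 1 + 1 + 1 + 1)
      (3 * m + 1 + 1 + 1) (2 * m + 1 + 1) (2 * m + 1 + 1) (m + 1) (3 * m + 1 + 1 + 1) := by
    rw [f_pow, C_1, one_mul]
    rfl
  rw [h, D]
  simp only [D5_mono, D3_mono, D4_mono, pderiv6_mono, pderiv7_mono, pderiv8_mono, pderiv9_mono,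
    pderiv10_mono]
  rw [Nat.add_sub_cancel, f_pow m]
  congr 1
  have hn' : ((m + 1 : ℕ) : Pol) = C ((m : ℚ) + 1) := by simp
  have h1 : (1 : Pol) = C 1 := C_1.symm
  have h2 : (2 : Pol) = C 2 := (map_ofNat C 2).symm
  have h3 : (3 : Pol) = C 3 := (map_ofNat C 3).symm
  have h4 : (4 : Pol) = C 4 := (map_ofNat C 4).symm
  have h6 : (6 : Pol) = C 6 := (map_ofNat C 6).symm
  rw [hn', h1, h2, h3, h4, h6]
  simp only [← C_mul, ← C_pow, ← C_sub, ← C_add]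
  congr 1
  push_cast
  ring

end Stmt5
end

section
/- Adjoin three further variables x₀, x₁, x₂, set f = x₀·x₁²·x₂²·g₃²·g₄·g₅·g₆², and let D = ∂_{x₀}∂_{x₁}²∂_{x₂}²∘E₃²∘E₄∘E₅∘E₆². Then there is a nonzero constant c such that for every integer n ≥ 1, D(fⁿ) = c·n⁹·(2n − 1)⁵·(4n − 1)·(4n + 1)·(5n − 1)·(5n + 1)·(5n − 2)·(5n − 3)·f^{n−1}. (This is the b-function identity for the rank-one stable grading of type (E₈, 20ₛ), with b_exp(z) = Φ₁⁹Φ₂⁵Φ₄Φ₅.) -/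
/-!
The functions `g₃, g₄, g₅, g₆` are the basic relative invariants of a prehomogeneous action of
`GL₂ × GL₂ × T` on the space of `(a, b, c, x)`, so each dual operator `E_i` maps
`g₃ ^ α * g₄ ^ β * g₅ ^ γ * g₆ ^ δ` to a multiple of the product with the exponent of `g_i` lowered
by one. The factors are
* `E₃`: `α (α + γ + δ + 1)`, `E₄`: `β (β + γ + δ + 1)`,
* `E₅`: `γ (α + γ + δ + 1) (β + γ + δ + 1)`, `E₆`: `δ (α + γ + δ + 1) (β + γ + δ + 1)`.

These are the lemmas `E3_mon`, …, `E6_mon`. For `E₅` and `E₆` the sum over `k` of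
`∂_{x_{jk}} ∂_{c_k}` is evaluated first (`V_one`, `V_two`): the contraction over `k` turns the
second-order terms back into multiples of `g₄, g₅, g₆`, which leaves a first-order computation in
`a` or `b`. Each formula is verified by the product rule and ring normalisation; the case splits
separate the small exponents, where truncated subtraction replaces a power by `1` in a term
whose coefficient vanishes.

Multiplying the factors along the chain `E₆, E₆, E₅, E₄, E₃, E₃` started at `f ^ n`, and those of
`∂_{x₀} ∂_{x₁}² ∂_{x₂}²`, gives the `b`-function, with constant `640`.
-/

/-!
Variables (`Fin 13`): `0 ↦ a₁`, `1 ↦ a₂`, `2 ↦ b₁`, `3 ↦ b₂`, `4 ↦ c₁`, `5 ↦ c₂`,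
`6 ↦ x₁₁`, `7 ↦ x₁₂`, `8 ↦ x₂₁`, `9 ↦ x₂₂`, `10 ↦ x₀`, `11 ↦ x₁`, `12 ↦ x₂`.
We set `g₃ = a₁b₂ − a₂b₁`, `g₄ = x₁₁x₂₂ − x₁₂x₂₁`, `g₅ = Σ b_j x_{jk} c_k`,
`g₆ = Σ a_j x_{jk} c_k`, `f = x₀·x₁²·x₂²·g₃²·g₄·g₅·g₆²`, and
`D = ∂_{x₀}∂_{x₁}²∂_{x₂}²∘E₃²∘E₄∘E₅∘E₆²` with
`E₃ = ∂_{a₁}∂_{b₂} − ∂_{a₂}∂_{b₁}`, `E₄ = ∂_{x₁₁}∂_{x₂₂} − ∂_{x₁₂}∂_{x₂₁}`,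
`E₅ = Σ ∂_{b_j}∂_{x_{jk}}∂_{c_k}`, `E₆ = Σ ∂_{a_j}∂_{x_{jk}}∂_{c_k}`.
-/

open MvPolynomial

namespace Stmt6

abbrev Pol := MvPolynomial (Fin 13) ℚ

noncomputable def g3 : Pol := X 0 * X 3 - X 1 * X 2
noncomputable def g4 : Pol := X 6 * X 9 - X 7 * X 8
noncomputable def g5 : Pol := X 2 * X 6 * X 4 + X 2 * X 7 * X 5 + X 3 * X 8 * X 4 + X 3 * X 9 * X 5
noncomputable def g6 : Pol := X 0 * X 6 * X 4 + X 0 * X 7 * X 5 + X 1 * X 8 * X 4 + X 1 * X 9 * X 5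

noncomputable def E3 (p : Pol) : Pol := pderiv 0 (pderiv 3 p) - pderiv 1 (pderiv 2 p)
noncomputable def E4 (p : Pol) : Pol := pderiv 6 (pderiv 9 p) - pderiv 7 (pderiv 8 p)
noncomputable def E5 (p : Pol) : Pol :=
  pderiv 2 (pderiv 6 (pderiv 4 p)) + pderiv 2 (pderiv 7 (pderiv 5 p)) +
    pderiv 3 (pderiv 8 (pderiv 4 p)) + pderiv 3 (pderiv 9 (pderiv 5 p))
noncomputable def E6 (p : Pol) : Pol :=
  pderiv 0 (pderiv 6 (pderiv 4 p)) + pderiv 0 (pderiv 7 (pderiv 5 p)) +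
    pderiv 1 (pderiv 8 (pderiv 4 p)) + pderiv 1 (pderiv 9 (pderiv 5 p))

noncomputable def f : Pol := X 10 * X 11 ^ 2 * X 12 ^ 2 * g3 ^ 2 * g4 * g5 * g6 ^ 2

noncomputable def D (p : Pol) : Pol :=
  pderiv 10 (pderiv 11 (pderiv 11 (pderiv 12 (pderiv 12 (E3 (E3 (E4 (E5 (E6 (E6 p))))))))))

/-- The relative invariant `M · g₃ ^ α · g₄ ^ β · g₅ ^ γ · g₆ ^ δ`, where the factor `M` is meant to
be free of the variables `a, b, c, x_{jk}` on which `E₃, E₄, E₅, E₆` act. -/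
noncomputable def mon (M : Pol) (α β γ δ : ℕ) : Pol := M * (g3 ^ α * g4 ^ β * g5 ^ γ * g6 ^ δ)

/-- `M` does not involve the variables `a, b, c, x_{jk}`, that is, those of index below `10`. -/
def Free (M : Pol) : Prop := ∀ i : Fin 13, i < 10 → pderiv i M = 0

lemma Free.mul {M N : Pol} (hM : Free M) (hN : Free N) : Free (M * N) := fun i hi => by
  simp [hM i hi, hN i hi]

lemma Free.pow {M : Pol} (hM : Free M) (n : ℕ) : Free (M ^ n) := fun i hi => by
  simp [hM i hi]

lemma free_natCast (n : ℕ) : Free (n : Pol) := fun i _ => by simp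

lemma free_X {j : Fin 13} (hj : 10 ≤ j) : Free (X j) := fun _ hi =>
  pderiv_X_of_ne (hi.trans_le hj).ne'

/-- With `V_j = ∂_{x_{j1}} ∂_{c₁} + ∂_{x_{j2}} ∂_{c₂}` one has
`V_j (g^s) = (β + γ + δ + 1) (γ b_j / g₅ + δ a_j / g₆) g^s`; this is the case `j = 1`. -/
lemma V_one (M : Pol) (hM : Free M) (α β γ δ : ℕ) :
    pderiv 6 (pderiv 4 (mon M α β γ δ)) + pderiv 7 (pderiv 5 (mon M α β γ δ)) =
      M * ((β + γ + δ + 1 : ℕ) : Pol) * g3 ^ α * g4 ^ β *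
        ((γ : Pol) * g5 ^ (γ - 1) * g6 ^ δ * X 2 + (δ : Pol) * g5 ^ γ * g6 ^ (δ - 1) * X 0) := by
  have h4 := hM 4 (by decide)
  have h5 := hM 5 (by decide)
  have h6 := hM 6 (by decide)
  have h7 := hM 7 (by decide)
  rcases γ with _ | _ | γ <;> rcases δ with _ | _ | δ <;> rcases β with _ | β <;>
  · simp [mon, g3, g4, g5, g6, pderiv_X, h4, h5, h6, h7]
    try ring

/-- The case `j = 2` of the formula in `V_one`. -/
lemma V_two (M : Pol) (hM : Free M) (α β γ δ : ℕ) :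
    pderiv 8 (pderiv 4 (mon M α β γ δ)) + pderiv 9 (pderiv 5 (mon M α β γ δ)) =
      M * ((β + γ + δ + 1 : ℕ) : Pol) * g3 ^ α * g4 ^ β *
        ((γ : Pol) * g5 ^ (γ - 1) * g6 ^ δ * X 3 + (δ : Pol) * g5 ^ γ * g6 ^ (δ - 1) * X 1) := by
  have h4 := hM 4 (by decide)
  have h5 := hM 5 (by decide)
  have h8 := hM 8 (by decide)
  have h9 := hM 9 (by decide)
  rcases γ with _ | _ | γ <;> rcases δ with _ | _ | δ <;> rcases β with _ | β <;>
  · simp [mon, g3, g4, g5, g6, pderiv_X, h4, h5, h8, h9]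
    try ring

lemma E3_mon (M : Pol) (hM : Free M) (α β γ δ : ℕ) :
    E3 (mon M (α + 1) β γ δ) =
      mon (M * (((α + 1) * (α + γ + δ + 2) : ℕ) : Pol)) α β γ δ := by
  have h0 := hM 0 (by decide)
  have h1 := hM 1 (by decide)
  have h2 := hM 2 (by decide)
  have h3 := hM 3 (by decide)
  rcases γ with _ | γ <;> rcases δ with _ | δ <;> rcases α with _ | α <;>
  · simp [E3, mon, g3, g4, g5, g6, pderiv_X, h0, h1, h2, h3]
    try ring

lemma E4_mon (M : Pol) (hM : Free M) (α β γ δ : ℕ) :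
    E4 (mon M α (β + 1) γ δ) =
      mon (M * (((β + 1) * (β + γ + δ + 2) : ℕ) : Pol)) α β γ δ := by
  have h6 := hM 6 (by decide)
  have h7 := hM 7 (by decide)
  have h8 := hM 8 (by decide)
  have h9 := hM 9 (by decide)
  rcases γ with _ | γ <;> rcases δ with _ | δ <;> rcases β with _ | β <;>
  · simp [E4, mon, g3, g4, g5, g6, pderiv_X, h6, h7, h8, h9]
    try ring

lemma E5_mon (M : Pol) (hM : Free M) (α β γ δ : ℕ) :
    E5 (mon M α β (γ + 1) δ) =
      mon (M * (((γ + 1) * (α + γ + δ + 2) * (β + γ + δ + 2) : ℕ) : Pol)) α β γ δ := by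
  have h2 := hM 2 (by decide)
  have h3 := hM 3 (by decide)
  have key : E5 (mon M α β (γ + 1) δ) =
      pderiv 2 (pderiv 6 (pderiv 4 (mon M α β (γ + 1) δ)) +
        pderiv 7 (pderiv 5 (mon M α β (γ + 1) δ))) +
      pderiv 3 (pderiv 8 (pderiv 4 (mon M α β (γ + 1) δ)) +
        pderiv 9 (pderiv 5 (mon M α β (γ + 1) δ))) := by
    simp only [E5, map_add]
    ring
  rw [key, V_one M hM, V_two M hM]
  rcases γ with _ | γ <;> rcases δ with _ | δ <;> rcases α with _ | α <;>
  · simp [mon, g3, g4, g5, g6, pderiv_X, h2, h3]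
    try ring

lemma E6_mon (M : Pol) (hM : Free M) (α β γ δ : ℕ) :
    E6 (mon M α β γ (δ + 1)) =
      mon (M * (((δ + 1) * (α + γ + δ + 2) * (β + γ + δ + 2) : ℕ) : Pol)) α β γ δ := by
  have h0 := hM 0 (by decide)
  have h1 := hM 1 (by decide)
  have key : E6 (mon M α β γ (δ + 1)) =
      pderiv 0 (pderiv 6 (pderiv 4 (mon M α β γ (δ + 1))) +
        pderiv 7 (pderiv 5 (mon M α β γ (δ + 1)))) +
      pderiv 1 (pderiv 8 (pderiv 4 (mon M α β γ (δ + 1))) +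
        pderiv 9 (pderiv 5 (mon M α β γ (δ + 1)))) := by
    simp only [E6, map_add]
    ring
  rw [key, V_one M hM, V_two M hM]
  rcases γ with _ | γ <;> rcases δ with _ | δ <;> rcases α with _ | α <;>
  · simp [mon, g3, g4, g5, g6, pderiv_X, h0, h1]
    try ring

/-- The contribution `∂_{x₀} ∂_{x₁}² ∂_{x₂}²` of the three further variables. -/
lemma torus_mon (m N : ℕ) :
    pderiv 10 (pderiv 11 (pderiv 11 (pderiv 12 (pderiv 12
      (mon ((X 10 * X 11 ^ 2 * X 12 ^ 2) ^ (m + 1) * (N : Pol)) (2 * m) m m (2 * m)))))) =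
      ((N * ((m + 1) * ((2 * m + 2) * (2 * m + 1)) ^ 2) : ℕ) : Pol) * f ^ m := by
  have two (i : Fin 13) : pderiv i (2 : Pol) = 0 := (pderiv i).map_natCast 2
  set P : Pol := (N : Pol) * (g3 ^ (2 * m) * g4 ^ m * g5 ^ m * g6 ^ (2 * m)) with hP
  have h10 : pderiv 10 P = 0 := by simp [hP, g3, g4, g5, g6, pderiv_X]
  have h11 : pderiv 11 P = 0 := by simp [hP, g3, g4, g5, g6, pderiv_X]
  have h12 : pderiv 12 P = 0 := by simp [hP, g3, g4, g5, g6, pderiv_X]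
  have e : mon ((X 10 * X 11 ^ 2 * X 12 ^ 2) ^ (m + 1) * (N : Pol)) (2 * m) m m (2 * m) =
      X 10 ^ (m + 1) * X 11 ^ (2 * m + 2) * X 12 ^ (2 * m + 2) * P := by
    simp only [mon, hP]
    ring
  have e' : ((N * ((m + 1) * ((2 * m + 2) * (2 * m + 1)) ^ 2) : ℕ) : Pol) * f ^ m =
      (((m + 1) * ((2 * m + 2) * (2 * m + 1)) ^ 2 : ℕ) : Pol) *
        (X 10 ^ m * X 11 ^ (2 * m) * X 12 ^ (2 * m) * P) := by
    simp only [f, hP]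
    push_cast
    ring
  rw [e, e']
  clear_value P
  simp [pderiv_X, h10, h11, h12, two]
  ring

/-- There is a nonzero constant `c` such that for every integer `n ≥ 1`,
`D(fⁿ) = c·n⁹·(2n−1)⁵·(4n−1)·(4n+1)·(5n−1)·(5n+1)·(5n−2)·(5n−3)·f^{n−1}`:
the b-function identity for the rank-one stable grading of type `(E₈, 20ₛ)`,
with `b_exp(z) = Φ₁⁹Φ₂⁵Φ₄Φ₅`. -/
theorem stmt_6 :
    ∃ c : ℚ, c ≠ 0 ∧ ∀ n : ℕ, 1 ≤ n →
      D (f ^ n) =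
        C c * (n : Pol) ^ 9 * (2 * (n : Pol) - 1) ^ 5 *
          (4 * (n : Pol) - 1) * (4 * (n : Pol) + 1) *
          (5 * (n : Pol) - 1) * (5 * (n : Pol) + 1) *
          (5 * (n : Pol) - 2) * (5 * (n : Pol) - 3) * f ^ (n - 1) := by
  refine ⟨640, by norm_num, fun n hn => ?_⟩
  obtain ⟨m, rfl⟩ : ∃ m, n = m + 1 := ⟨n - 1, by omega⟩
  have hM : Free ((X 10 * X 11 ^ 2 * X 12 ^ 2) ^ (m + 1)) :=
    (((free_X (by decide)).mul ((free_X (by decide)).pow _)).mul ((free_X (by decide)).pow _)).pow _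
  have hf : f ^ (m + 1) = mon ((X 10 * X 11 ^ 2 * X 12 ^ 2) ^ (m + 1))
      (2 * m + 1 + 1) (m + 1) (m + 1) (2 * m + 1 + 1) := by
    simp only [f, mon]
    ring
  have hN (N : ℕ) : Free ((X 10 * X 11 ^ 2 * X 12 ^ 2) ^ (m + 1) * (N : Pol)) :=
    hM.mul (free_natCast N)
  have assoc (M : Pol) (N N' : ℕ) : M * (N : Pol) * (N' : Pol) = M * ((N * N' : ℕ) : Pol) := by
    rw [Nat.cast_mul, mul_assoc]
  rw [hf, D, E6_mon _ hM, E6_mon _ (hN _), assoc, E5_mon _ (hN _), assoc, E4_mon _ (hN _), assoc,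
    E3_mon _ (hN _), assoc, E3_mon _ (hN _), assoc, torus_mon, Nat.add_sub_cancel]
  congr 1
  rw [map_ofNat]
  push_cast
  ring

end Stmt6
end

section
/- Consider the action of SL₂(ℂ)×(ℂˣ)³ on ℂ² ⊕ Sym²(ℂ²) ⊕ ℂ², with coordinates (x₁, x₂, X, v) where X is a symmetric 2×2 complex matrix and v ∈ ℂ², given by: g·(x₁,x₂,X,v) = (x₁, x₂, gXgᵀ, (gᵀ)⁻¹v) for g ∈ SL₂(ℂ), and (t₁,t₃,t₄)·(x₁,x₂,X,v) = (t₁x₁, t₁⁻²t₃²t₄⁻¹x₂, t₁t₃⁻²t₄²X, t₃t₄⁻²v) for (t₁,t₃,t₄) ∈ (ℂˣ)³. Then the algebra of invariant polynomial functions equals the ℂ-subalgebra generated by the single polynomial f = x₁·x₂²·(vᵀXv)·(det X). (This is the invariant ring ℂ[𝔤₁]^{G₀} = ℂ[f] for the stable grading of type (F₄, 8ₛ).) -/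
/-!
The orbit of a point `w` with `x₁`, `x₂` and `Q = vᵀXv` all nonzero meets the affine line
`s ↦ (1, 1, diag(s, 1), (0, 1))`, on which `f` takes the value `s`: some `g ∈ SL₂(ℂ)` sends `v`
to `(0, 1)` and makes `X` diagonal, and what is left is scaled to `1` by the torus after two square
roots are extracted (`exists_act_eq`). By invariance of `f`, the point met is the one with
`s = f(w)`. Hence an invariant `P` agrees with `h(f)` on a nonempty Zariski-open set, where
`h ∈ ℂ[s]` is the restriction of `P` to the line, and so `P = h(f)` as polynomials.
-/

/-!
Coordinates (`Fin 7`) on `ℂ² ⊕ Sym²(ℂ²) ⊕ ℂ²`: `0 ↦ x₁`, `1 ↦ x₂`, and the symmetric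
matrix `X = !![p, q; q, r]` with `2 ↦ p = X₁₁`, `3 ↦ q = X₁₂ = X₂₁`, `4 ↦ r = X₂₂`,
and `5 ↦ v₁`, `6 ↦ v₂`.  The group `SL₂(ℂ) × (ℂˣ)³` acts by
`g·(x₁,x₂,X,v) = (x₁, x₂, gXgᵀ, (gᵀ)⁻¹v)` and
`(t₁,t₃,t₄)·(x₁,x₂,X,v) = (t₁x₁, t₁⁻²t₃²t₄⁻¹x₂, t₁t₃⁻²t₄²X, t₃t₄⁻²v)`;
the map `act` below writes out the combined action explicitly (for `g` of
determinant `1`, `(gᵀ)⁻¹ = !![d, −c; −b, a]`).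
-/

open MvPolynomial Matrix

namespace Stmt9

/-- The combined action of `g ∈ SL₂(ℂ)` and `(t₁,t₃,t₄) ∈ (ℂˣ)³` in coordinates. -/
noncomputable def act (m : Matrix (Fin 2) (Fin 2) ℂ) (t₁ t₃ t₄ : ℂˣ) (w : Fin 7 → ℂ) :
    Fin 7 → ℂ :=
  ![(t₁ : ℂ) * w 0,
    (t₁ : ℂ)⁻¹ ^ 2 * (t₃ : ℂ) ^ 2 * (t₄ : ℂ)⁻¹ * w 1,
    (t₁ : ℂ) * (t₃ : ℂ)⁻¹ ^ 2 * (t₄ : ℂ) ^ 2 *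
      (m 0 0 ^ 2 * w 2 + 2 * m 0 0 * m 0 1 * w 3 + m 0 1 ^ 2 * w 4),
    (t₁ : ℂ) * (t₃ : ℂ)⁻¹ ^ 2 * (t₄ : ℂ) ^ 2 *
      (m 0 0 * m 1 0 * w 2 + (m 0 0 * m 1 1 + m 0 1 * m 1 0) * w 3 + m 0 1 * m 1 1 * w 4),
    (t₁ : ℂ) * (t₃ : ℂ)⁻¹ ^ 2 * (t₄ : ℂ) ^ 2 *
      (m 1 0 ^ 2 * w 2 + 2 * m 1 0 * m 1 1 * w 3 + m 1 1 ^ 2 * w 4),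
    (t₃ : ℂ) * (t₄ : ℂ)⁻¹ ^ 2 * (m 1 1 * w 5 - m 1 0 * w 6),
    (t₃ : ℂ) * (t₄ : ℂ)⁻¹ ^ 2 * (-(m 0 1) * w 5 + m 0 0 * w 6)]

/-- `f = x₁ · x₂² · (vᵀXv) · (det X)`. -/
noncomputable def F : MvPolynomial (Fin 7) ℂ :=
  X 0 * (X 1) ^ 2 * (X 2 * (X 5) ^ 2 + 2 * X 3 * X 5 * X 6 + X 4 * (X 6) ^ 2) *
    (X 2 * X 4 - (X 3) ^ 2)

/-- The polynomial `vᵀXv`. -/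
noncomputable def Q : MvPolynomial (Fin 7) ℂ :=
  X 2 * (X 5) ^ 2 + 2 * X 3 * X 5 * X 6 + X 4 * (X 6) ^ 2

lemma eval_Q (w : Fin 7 → ℂ) :
    eval w Q = w 2 * w 5 ^ 2 + 2 * w 3 * w 5 * w 6 + w 4 * w 6 ^ 2 := by
  simp [Q]

lemma eval_F (w : Fin 7 → ℂ) :
    eval w F = w 0 * w 1 ^ 2 * (w 2 * w 5 ^ 2 + 2 * w 3 * w 5 * w 6 + w 4 * w 6 ^ 2) *
      (w 2 * w 4 - w 3 ^ 2) := by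
  simp [F]

/-- Without the determinant condition, `f` is a semi-invariant of weight `(det m)⁴`. -/
lemma eval_act_F (m : Matrix (Fin 2) (Fin 2) ℂ) (t₁ t₃ t₄ : ℂˣ) (w : Fin 7 → ℂ) :
    eval (act m t₁ t₃ t₄ w) F = m.det ^ 4 * eval w F := by
  have h₁ := t₁.ne_zero
  have h₃ := t₃.ne_zero
  have h₄ := t₄.ne_zero
  rw [eval_F, eval_F, Matrix.det_fin_two]
  simp only [act, Matrix.cons_val]
  field_simp
  ring

/-- The line `s ↦ (1, 1, diag(s, 1), (0, 1))`, over any commutative ring so that it also makes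
sense at the generic point `s = X` of `ℂ[X]`. -/
def line {R : Type*} [CommRing R] (s : R) : Fin 7 → R := ![1, 1, s, 0, 1, 0, 1]

lemma exists_act_eq (w : Fin 7 → ℂ) (h0 : w 0 ≠ 0) (h1 : w 1 ≠ 0) (hQ : eval w Q ≠ 0) :
    ∃ (g : SpecialLinearGroup (Fin 2) ℂ) (t₁ t₃ t₄ : ℂˣ),
      act (g : Matrix (Fin 2) (Fin 2) ℂ) t₁ t₃ t₄ w = line (eval w F) := by
  rw [eval_Q] at hQ
  rw [eval_F]
  set q := w 2 * w 5 ^ 2 + 2 * w 3 * w 5 * w 6 + w 4 * w 6 ^ 2 with hq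
  -- `z = t₄` normalises the entry `X₂₂` to `1`, and then `y = t₃` normalises `x₂` to `1`.
  obtain ⟨z, hz⟩ := IsAlgClosed.exists_pow_nat_eq (q / w 0) (n := 2) (by norm_num)
  have hz0 : z ≠ 0 := by
    rintro rfl
    exact div_ne_zero hQ h0 (by simpa using hz.symm)
  obtain ⟨y, hy⟩ := IsAlgClosed.exists_pow_nat_eq (z / (w 0 ^ 2 * w 1)) (n := 2) (by norm_num)
  have hy0 : y ≠ 0 := by
    rintro rfl
    exact div_ne_zero hz0 (mul_ne_zero (pow_ne_zero 2 h0) h1) (by simpa using hy.symm)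
  have hz' : q = z ^ 2 * w 0 := by rw [hz]; field_simp
  have hy' : z = y ^ 2 * (w 0 ^ 2 * w 1) := by rw [hy]; field_simp
  -- The second row of `g` is proportional to `v`, which forces `(gᵀ)⁻¹v ∈ ℂ(0, 1)`; the first row
  -- is orthogonal to `Xv`, which makes `gXgᵀ` diagonal. The factor `z²/y` makes `v₂` equal to `1`.
  let m : Matrix (Fin 2) (Fin 2) ℂ :=
    !![z ^ 2 / y * ((w 3 * w 5 + w 4 * w 6) / q), -(z ^ 2 / y * ((w 2 * w 5 + w 3 * w 6) / q));
       y / z ^ 2 * w 5, y / z ^ 2 * w 6]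
  have hm : m.det = 1 := by
    simp only [m, Matrix.det_fin_two_of]
    field_simp
    rw [hq]; ring
  have hF := eval_act_F m (Units.mk0 _ h0)⁻¹ (Units.mk0 y hy0) (Units.mk0 z hz0) w
  refine ⟨⟨m, hm⟩, (Units.mk0 _ h0)⁻¹, Units.mk0 y hy0, Units.mk0 z hz0, ?_⟩
  have e0 : act m (Units.mk0 _ h0)⁻¹ (Units.mk0 y hy0) (Units.mk0 z hz0) w 0 = 1 := by
    simp [act, h0]
  have e1 : act m (Units.mk0 _ h0)⁻¹ (Units.mk0 y hy0) (Units.mk0 z hz0) w 1 = 1 := by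
    simp only [act, Matrix.cons_val, Units.val_inv_eq_inv_val, Units.val_mk0]
    field_simp
    rw [hy']; ring
  have e3 : act m (Units.mk0 _ h0)⁻¹ (Units.mk0 y hy0) (Units.mk0 z hz0) w 3 = 0 := by
    simp only [act, m, Matrix.cons_val, Matrix.of_apply, Units.val_inv_eq_inv_val, Units.val_mk0]
    field_simp
    ring
  have e4 : act m (Units.mk0 _ h0)⁻¹ (Units.mk0 y hy0) (Units.mk0 z hz0) w 4 = 1 := by
    simp only [act, m, Matrix.cons_val, Matrix.of_apply, Units.val_inv_eq_inv_val, Units.val_mk0]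
    field_simp
    linear_combination hz' - hq
  have e5 : act m (Units.mk0 _ h0)⁻¹ (Units.mk0 y hy0) (Units.mk0 z hz0) w 5 = 0 := by
    simp only [act, m, Matrix.cons_val, Matrix.of_apply, Units.val_inv_eq_inv_val, Units.val_mk0]
    ring
  have e6 : act m (Units.mk0 _ h0)⁻¹ (Units.mk0 y hy0) (Units.mk0 z hz0) w 6 = 1 := by
    simp only [act, m, Matrix.cons_val, Matrix.of_apply, Units.val_inv_eq_inv_val, Units.val_mk0]
    field_simp
    rw [hq]; ring
  -- The remaining coordinate is read off from the invariance of `f`.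
  rw [eval_F, eval_F, hm, e0, e1, e3, e4, e5, e6] at hF
  ext i
  fin_cases i
  · exact e0
  · exact e1
  · refine Eq.trans ?_ (hF.trans (by simp [line, hq]))
    simp
  · exact e3
  · exact e4
  · exact e5
  · exact e6

lemma eval_line_eval (P : MvPolynomial (Fin 7) ℂ) (s : ℂ) :
    eval (line s) P = (aeval (line (Polynomial.X : Polynomial ℂ)) P).eval s := by
  have h : eval (line s) =
      (Polynomial.evalRingHom s).comp
        (aeval (line (Polynomial.X : Polynomial ℂ)) : _ →ₐ[ℂ] Polynomial ℂ).toRingHom := by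
    apply MvPolynomial.ringHom_ext
    · intro c
      simp
    · intro i
      fin_cases i <;> simp [line]
  rw [h]
  rfl

/-- The algebra of `SL₂(ℂ) × (ℂˣ)³`-invariant polynomial functions equals the
`ℂ`-subalgebra generated by `f = x₁x₂²(vᵀXv)(det X)`:  the invariant ring
`ℂ[𝔤₁]^{G₀} = ℂ[f]` for the stable grading of type `(F₄, 8ₛ)`. -/
theorem stmt_9 (P : MvPolynomial (Fin 7) ℂ) :
    (∀ g : SpecialLinearGroup (Fin 2) ℂ, ∀ t₁ t₃ t₄ : ℂˣ, ∀ w : Fin 7 → ℂ,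
        eval (act (g : Matrix (Fin 2) (Fin 2) ℂ) t₁ t₃ t₄ w) P = eval w P) ↔
      P ∈ Algebra.adjoin ℂ {F} := by
  constructor
  · intro hP
    set h : Polynomial ℂ := aeval (line Polynomial.X) P with hh
    suffices hPF : P = Polynomial.aeval F h by
      rw [hPF]
      exact Polynomial.aeval_mem_adjoin_singleton ℂ F
    have hne : (X 0 * X 1 * Q : MvPolynomial (Fin 7) ℂ) ≠ 0 := by
      intro h0
      have := congrArg (eval (line (0 : ℂ))) h0
      simp [eval_Q, line] at this
    have hmul : (X 0 * X 1 * Q) * (P - Polynomial.aeval F h) = 0 := by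
      apply MvPolynomial.funext
      intro w
      rw [map_mul, map_zero, mul_eq_zero, or_iff_not_imp_left]
      intro hw
      simp only [map_mul, eval_X, mul_eq_zero, not_or] at hw
      obtain ⟨g, t₁, t₃, t₄, hg⟩ := exists_act_eq w hw.1.1 hw.1.2 hw.2
      rw [map_sub, ← hP g t₁ t₃ t₄ w, hg, eval_line_eval, ← hh, sub_eq_zero,
        ← MvPolynomial.coe_aeval_eq_eval, RingHom.coe_coe, ← Polynomial.coe_aeval_eq_eval]
      exact Polynomial.aeval_algHom_apply (aeval w) F h
    exact sub_eq_zero.mp ((mul_eq_zero.mp hmul).resolve_left hne)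
  · intro hP g t₁ t₃ t₄ w
    induction hP using Algebra.adjoin_induction with
    | mem x hx =>
      rw [Set.mem_singleton_iff.mp hx, eval_act_F, g.det_coe, one_pow, one_mul]
    | algebraMap c => simp [MvPolynomial.algebraMap_eq]
    | add x y _ _ hx hy => rw [map_add, map_add, hx, hy]
    | mul x y _ _ hx hy => rw [map_mul, map_mul, hx, hy]

end Stmt9
end

section
/- Let σ be an automorphism of R and α ∈ R a root with α + σα + σ²α = 0. Then σα ∉ {α, −α}, and ⟨σα, α∨⟩ = −1 and ⟨σ²α, α∨⟩ = −1. (Hence {±α, ±σα, ±σ²α} is a subroot system of type A₂ with root basis {α, σα}.) -/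
/-!
`R` is a reduced crystallographic root system spanning a finite-dimensional real inner
product space `V` (the inner product being invariant under the Weyl group of `R`, which
is guaranteed here by taking `σ`-type symmetries as linear isometries and imposing the
reflection-closure axiom), `⟨β, α∨⟩ = 2(β,α)/(α,α)`, and `σ` is an automorphism of `R`,
i.e. a linear isometry of `V` with `σ(R) = R`.
-/

open RealInnerProductSpace

/-!
Because `σ` is an isometry, `α`, `σ α` and `σ² α = -(α + σ α)` all have the same length.
Expanding `‖α + σ α‖² = ‖α‖²` gives `2 ⟪σ α, α⟫ = -⟪α, α⟫`, and pairing
`α + σ α + σ² α = 0` with `α` then gives `2 ⟪σ² α, α⟫ = -⟪α, α⟫`.  Since `α ≠ 0`, these are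
the two claimed values, and they exclude `σ α = ± α`.
-/

theorem stmt_13
    {V : Type*} [NormedAddCommGroup V] [InnerProductSpace ℝ V] [FiniteDimensional ℝ V]
    (R : Set V) (hfin : R.Finite) (hspan : Submodule.span ℝ R = ⊤)
    (h0 : (0 : V) ∉ R)
    (hcrys : ∀ α ∈ R, ∀ β ∈ R, ∃ n : ℤ, 2 * ⟪β, α⟫ / ⟪α, α⟫ = (n : ℝ))
    (hred : ∀ α ∈ R, ∀ c : ℝ, c • α ∈ R → c = 1 ∨ c = -1)
    (hrefl : ∀ α ∈ R, ∀ β ∈ R, β - (2 * ⟪β, α⟫ / ⟪α, α⟫) • α ∈ R)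
    (σ : V ≃ₗᵢ[ℝ] V) (hσ : σ '' R = R)
    (α : V) (hα : α ∈ R) (hsum : α + σ α + σ (σ α) = 0) :
    σ α ≠ α ∧ σ α ≠ -α ∧
      2 * ⟪σ α, α⟫ / ⟪α, α⟫ = -1 ∧
      2 * ⟪σ (σ α), α⟫ / ⟪α, α⟫ = -1 := by
  have hpos : 0 < ⟪α, α⟫ := real_inner_self_pos.mpr fun h => h0 (h ▸ hα)
  have hσ2 : σ (σ α) = -(α + σ α) := by
    rw [eq_neg_iff_add_eq_zero, add_comm, hsum]
  have h1 : ⟪σ α, σ α⟫ = ⟪α, α⟫ := σ.inner_map_map α α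
  have h2 : ⟪σ (σ α), σ (σ α)⟫ = ⟪α, α⟫ := by
    rw [σ.inner_map_map, σ.inner_map_map]
  rw [hσ2, inner_neg_neg, real_inner_add_add_self, h1, real_inner_comm (σ α) α] at h2
  have h3 : ⟪σ (σ α), α⟫ = -(⟪α, α⟫ + ⟪σ α, α⟫) := by
    rw [hσ2, inner_neg_left, inner_add_left]
  refine ⟨fun h => ?_, fun h => ?_, ?_, ?_⟩
  · rw [h] at h2
    linarith
  · rw [h, inner_neg_left] at h2
    linarith
  · rw [div_eq_iff hpos.ne']
    linarith
  · rw [div_eq_iff hpos.ne', h3]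
    linarith
end

section
/- Let σ be an automorphism of R and α ∈ R a root with σ²α − σα + α = 0. Then σα ∉ {α, −α}, and ⟨σα, α∨⟩ = 1 and ⟨σ²α, α∨⟩ = −1. (Hence {±α, ±σα, ±σ²α} is a subroot system of type A₂ with root basis {α, −σα}.) -/
/-!
Pairing `σ²α = σα - α` with `σα` and using that `σ` is an isometry gives
`⟪σα, α⟫ = ⟪α, α⟫ - ⟪σα, α⟫`, hence `2⟪σα, α⟫ = ⟪α, α⟫`. As `⟪α, α⟫ > 0`, this is the first
coroot value and excludes `σα = ±α`; pairing the same relation with `α` gives the second value.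
-/

/-!
`R` is a reduced crystallographic root system spanning a finite-dimensional real inner
product space `V`, `⟨β, α∨⟩ = 2(β,α)/(α,α)`, and `σ` is an automorphism of `R`,
i.e. a linear isometry of `V` with `σ(R) = R`.
-/

open RealInnerProductSpace

theorem stmt_14
    {V : Type*} [NormedAddCommGroup V] [InnerProductSpace ℝ V] [FiniteDimensional ℝ V]
    (R : Set V) (hfin : R.Finite) (hspan : Submodule.span ℝ R = ⊤)
    (h0 : (0 : V) ∉ R)
    (hcrys : ∀ α ∈ R, ∀ β ∈ R, ∃ n : ℤ, 2 * ⟪β, α⟫ / ⟪α, α⟫ = (n : ℝ))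
    (hred : ∀ α ∈ R, ∀ c : ℝ, c • α ∈ R → c = 1 ∨ c = -1)
    (hrefl : ∀ α ∈ R, ∀ β ∈ R, β - (2 * ⟪β, α⟫ / ⟪α, α⟫) • α ∈ R)
    (σ : V ≃ₗᵢ[ℝ] V) (hσ : σ '' R = R)
    (α : V) (hα : α ∈ R) (hsum : σ (σ α) - σ α + α = 0) :
    σ α ≠ α ∧ σ α ≠ -α ∧
      2 * ⟪σ α, α⟫ / ⟪α, α⟫ = 1 ∧
      2 * ⟪σ (σ α), α⟫ / ⟪α, α⟫ = -1 := by
  have hpos : 0 < ⟪α, α⟫ := real_inner_self_pos.2 fun h => h0 (h ▸ hα)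
  have hσ2 : σ (σ α) = σ α - α := by
    rw [← sub_eq_zero, ← hsum]
    abel
  -- Pair `σ²α = σα - α` with `σα`.
  have hp : 2 * ⟪σ α, α⟫ = ⟪α, α⟫ := by
    have h : ⟪σ (σ α), σ α⟫ = ⟪σ α, α⟫ := σ.inner_map_map _ _
    rw [hσ2, inner_sub_left, σ.inner_map_map, real_inner_comm (σ α) α] at h
    linarith
  refine ⟨fun h => ?_, fun h => ?_, ?_, ?_⟩
  · rw [h] at hp
    linarith
  · rw [h, inner_neg_left] at hp
    linarith
  · rw [hp, div_self hpos.ne']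
  · rw [hσ2, inner_sub_left, div_eq_iff hpos.ne']
    linarith
end

section
/- Let σ be an automorphism of R and α ∈ R a root with σ²α = −α. Then σα ∉ {α, −α} and ⟨σα, α∨⟩ = 0, i.e., σα is orthogonal to α. (Hence {±α, ±σα} is a subroot system of type A₁ × A₁.) -/
/-!
`R` is a reduced crystallographic root system spanning a finite-dimensional real inner
product space `V`, `⟨β, α∨⟩ = 2(β,α)/(α,α)`, and `σ` is an automorphism of `R`,
i.e. a linear isometry of `V` with `σ(R) = R`.
-/

open RealInnerProductSpace

theorem stmt_15
    {V : Type*} [NormedAddCommGroup V] [InnerProductSpace ℝ V] [FiniteDimensional ℝ V]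
    (R : Set V) (hfin : R.Finite) (hspan : Submodule.span ℝ R = ⊤)
    (h0 : (0 : V) ∉ R)
    (hcrys : ∀ α ∈ R, ∀ β ∈ R, ∃ n : ℤ, 2 * ⟪β, α⟫ / ⟪α, α⟫ = (n : ℝ))
    (hred : ∀ α ∈ R, ∀ c : ℝ, c • α ∈ R → c = 1 ∨ c = -1)
    (hrefl : ∀ α ∈ R, ∀ β ∈ R, β - (2 * ⟪β, α⟫ / ⟪α, α⟫) • α ∈ R)
    (σ : V ≃ₗᵢ[ℝ] V) (hσ : σ '' R = R)
    (α : V) (hα : α ∈ R) (hsq : σ (σ α) = -α) :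
    σ α ≠ α ∧ σ α ≠ -α ∧
      2 * ⟪σ α, α⟫ / ⟪α, α⟫ = 0 ∧ ⟪σ α, α⟫ = 0 := by
  -- `σ` preserves the inner product: `⟪σ α, α⟫ = ⟪σ (σ α), σ α⟫ = -⟪α, σ α⟫`.
  have horth : ⟪σ α, α⟫ = 0 := by
    have h := σ.inner_map_map (σ α) α
    rw [hsq, inner_neg_left, real_inner_comm] at h
    linarith
  have hne : ⟪α, α⟫ ≠ 0 := by
    rw [Ne, inner_self_eq_zero]
    rintro rfl
    exact h0 hα
  refine ⟨fun h => hne ?_, fun h => hne ?_, by simp [horth], horth⟩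
  · rwa [h] at horth
  · rwa [h, inner_neg_left, neg_eq_zero] at horth
end

section
/- Let σ be an automorphism of R and α ∈ R a root with α + σα + σ²α + σ³α + σ⁴α = 0. Then σⁱα ∉ {α, −α} for i = 1,2,3,4, one has ⟨σα, α∨⟩ = ⟨σ⁴α, α∨⟩ and ⟨σ²α, α∨⟩ = ⟨σ³α, α∨⟩, and exactly one of the following holds: ⟨σα, α∨⟩ = −1 and ⟨σ²α, α∨⟩ = 0, or ⟨σα, α∨⟩ = 0 and ⟨σ²α, α∨⟩ = −1. -/
/-!
Applying `σ` to the relation `α + σα + σ²α + σ³α + σ⁴α = 0` and subtracting gives `σ⁵α = α`.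
Since `5` is prime, `σⁱα = α` or `σⁱα = -α` for some `1 ≤ i ≤ 4` would force `σα = α` or
`σα = -α`, and then the relation reads `5α = 0` or `α = 0`.

As `σ` is an isometry, `(σ⁴α, α) = (σ⁵α, σα) = (σα, α)` and likewise `(σ³α, α) = (σ²α, α)`.
Pairing the relation with `α` therefore gives `p + q = -1`, where `p = ⟨σα, α∨⟩` and
`q = ⟨σ²α, α∨⟩` are integers. Both lie strictly between `-2` and `2`
(`cartan_bounds`), which leaves only `(p, q) = (-1, 0)` and `(p, q) = (0, -1)`.
-/

open RealInnerProductSpace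

/-- The strict Cauchy–Schwarz bound `|⟨y, x∨⟩| < 2` for vectors of equal length with `y ≠ ±x`. -/
theorem cartan_bounds {V : Type*} [NormedAddCommGroup V] [InnerProductSpace ℝ V]
    {x y : V} (hx : x ≠ 0) (hn : ‖y‖ = ‖x‖) (h1 : y ≠ x) (h2 : y ≠ -x) :
    -2 < 2 * ⟪y, x⟫ / ⟪x, x⟫ ∧ 2 * ⟪y, x⟫ / ⟪x, x⟫ < 2 := by
  have hpos : 0 < ⟪x, x⟫ := real_inner_self_pos.2 hx
  have hy : ⟪y, y⟫ = ⟪x, x⟫ := by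
    rw [real_inner_self_eq_norm_sq, real_inner_self_eq_norm_sq, hn]
  have hsub : 0 < ⟪y - x, y - x⟫ := real_inner_self_pos.2 (sub_ne_zero.2 h1)
  have hadd : 0 < ⟪y + x, y + x⟫ :=
    real_inner_self_pos.2 fun h => h2 (eq_neg_of_add_eq_zero_left h)
  rw [real_inner_sub_sub_self] at hsub
  rw [real_inner_add_add_self] at hadd
  rw [lt_div_iff₀ hpos, div_lt_iff₀ hpos]
  constructor <;> linarith

theorem stmt_16
    {V : Type*} [NormedAddCommGroup V] [InnerProductSpace ℝ V] [FiniteDimensional ℝ V]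
    (R : Set V) (hfin : R.Finite) (hspan : Submodule.span ℝ R = ⊤)
    (h0 : (0 : V) ∉ R)
    (hcrys : ∀ α ∈ R, ∀ β ∈ R, ∃ n : ℤ, 2 * ⟪β, α⟫ / ⟪α, α⟫ = (n : ℝ))
    (hred : ∀ α ∈ R, ∀ c : ℝ, c • α ∈ R → c = 1 ∨ c = -1)
    (hrefl : ∀ α ∈ R, ∀ β ∈ R, β - (2 * ⟪β, α⟫ / ⟪α, α⟫) • α ∈ R)
    (σ : V ≃ₗᵢ[ℝ] V) (hσ : σ '' R = R)
    (α : V) (hα : α ∈ R)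
    (hsum : α + σ α + σ (σ α) + σ (σ (σ α)) + σ (σ (σ (σ α))) = 0) :
    (σ α ≠ α ∧ σ α ≠ -α) ∧
    (σ (σ α) ≠ α ∧ σ (σ α) ≠ -α) ∧
    (σ (σ (σ α)) ≠ α ∧ σ (σ (σ α)) ≠ -α) ∧
    (σ (σ (σ (σ α))) ≠ α ∧ σ (σ (σ (σ α))) ≠ -α) ∧
    2 * ⟪σ α, α⟫ / ⟪α, α⟫ = 2 * ⟪σ (σ (σ (σ α))), α⟫ / ⟪α, α⟫ ∧
    2 * ⟪σ (σ α), α⟫ / ⟪α, α⟫ = 2 * ⟪σ (σ (σ α)), α⟫ / ⟪α, α⟫ ∧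
    Xor'
      (2 * ⟪σ α, α⟫ / ⟪α, α⟫ = -1 ∧ 2 * ⟪σ (σ α), α⟫ / ⟪α, α⟫ = 0)
      (2 * ⟪σ α, α⟫ / ⟪α, α⟫ = 0 ∧ 2 * ⟪σ (σ α), α⟫ / ⟪α, α⟫ = -1) := by
  have hα0 : α ≠ 0 := fun h => h0 (h ▸ hα)
  have h5 : σ (σ (σ (σ (σ α)))) = α := by
    have h := congrArg σ hsum
    simp only [map_add, map_zero] at h
    have h' := h.trans hsum.symm
    rw [← sub_eq_zero] at h' ⊢
    rw [← h']
    abel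
  have n1 : σ α ≠ α := by
    intro h
    simp only [h] at hsum
    have h' : (5 : ℝ) • α = 0 := by
      rw [← hsum]
      module
    exact hα0 ((smul_eq_zero.1 h').resolve_left (by norm_num))
  have n1' : σ α ≠ -α := by
    intro h
    simp only [h, map_neg, neg_neg] at hsum
    apply hα0
    rw [← hsum]
    abel
  have n2 : σ (σ α) ≠ α := by
    intro h
    simp only [h] at h5
    exact n1 h5
  have n2' : σ (σ α) ≠ -α := by
    intro h
    simp only [h, map_neg, neg_neg] at h5
    exact n1 h5
  -- If `σ³α = ±α`, then `σα = σ⁶α = α`.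
  have n3 : σ (σ (σ α)) ≠ α := by
    intro h
    have h6 := congrArg σ h5
    simp only [h] at h6
    exact n1 h6.symm
  have n3' : σ (σ (σ α)) ≠ -α := by
    intro h
    have h6 := congrArg σ h5
    simp only [h, map_neg, neg_neg] at h6
    exact n1 h6.symm
  have n4 : σ (σ (σ (σ α))) ≠ α := by
    intro h
    rw [h] at h5
    exact n1 h5
  have n4' : σ (σ (σ (σ α))) ≠ -α := by
    intro h
    rw [h, map_neg] at h5
    exact n1' (neg_eq_iff_eq_neg.1 h5)
  have e1 : ⟪σ (σ (σ (σ α))), α⟫ = ⟪σ α, α⟫ := by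
    rw [← σ.inner_map_map, h5, real_inner_comm]
  have e2 : ⟪σ (σ (σ α)), α⟫ = ⟪σ (σ α), α⟫ := by
    rw [← σ.inner_map_map, ← σ.inner_map_map, h5, real_inner_comm]
  have hpos : 0 < ⟪α, α⟫ := real_inner_self_pos.2 hα0
  have hrel : 2 * ⟪σ α, α⟫ / ⟪α, α⟫ + 2 * ⟪σ (σ α), α⟫ / ⟪α, α⟫ = -1 := by
    have h := congrArg (fun v => ⟪v, α⟫) hsum
    simp only [inner_add_left, inner_zero_left, e1, e2] at h
    field_simp
    linarith
  have hR : ∀ x ∈ R, σ x ∈ R := fun x hx => hσ ▸ Set.mem_image_of_mem σ hx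
  obtain ⟨hp1, hp2⟩ := cartan_bounds hα0 (σ.norm_map α) n1 n1'
  obtain ⟨hq1, hq2⟩ := cartan_bounds hα0 (by simp) n2 n2'
  obtain ⟨p, hp⟩ := hcrys α hα _ (hR _ hα)
  obtain ⟨q, hq⟩ := hcrys α hα _ (hR _ (hR _ hα))
  refine ⟨⟨n1, n1'⟩, ⟨n2, n2'⟩, ⟨n3, n3'⟩, ⟨n4, n4'⟩, by rw [e1], by rw [e2], ?_⟩
  rw [hp] at hp1 hp2 hrel ⊢
  rw [hq] at hq1 hq2 hrel ⊢
  norm_cast at hp1 hp2 hq1 hq2 hrel ⊢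
  change (_ ∧ ¬ _) ∨ (_ ∧ ¬ _)
  omega
end

section
/- Let σ be an automorphism of R and α ∈ R a root with α − σα + σ²α − σ³α + σ⁴α = 0 (so automatically σ⁵α = −α). Then σⁱα ∉ {α, −α} for i = 1,2,3,4, one has ⟨σα, α∨⟩ = −⟨σ⁴α, α∨⟩ and ⟨σ²α, α∨⟩ = −⟨σ³α, α∨⟩, and exactly one of the following holds: ⟨σα, α∨⟩ = 1 and ⟨σ²α, α∨⟩ = 0, or ⟨σα, α∨⟩ = 0 and ⟨σ²α, α∨⟩ = −1. -/
/-!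
Write `aᵢ = ⟨σⁱα, α∨⟩`. Applying `σ` to the relation `∑ (-σ)ⁱα = 0` and adding gives `σ⁵α = -α`.
If `σⁱα = ±α` for some `1 ≤ i ≤ 4`, this forces `σα = ±α`, and the relation then becomes
`α = 0` or `5α = 0`. Invariance of the inner product together with `σ⁵α = -α` yields `a₄ = -a₁`
and `a₃ = -a₂`, so pairing the relation with `α∨` gives `a₁ - a₂ = 1`. Finally `σⁱα` has the same
length as `α` and differs from `±α`, so the integer `aᵢ` lies in `{-1, 0, 1}`, which leaves only
`(a₁, a₂) = (1, 0)` and `(0, -1)`.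
-/

open RealInnerProductSpace

/-- Vectors of equal length that differ and are not opposite pair strictly between `-2` and `2`:
expand `‖β - α‖² > 0` and `‖β + α‖² > 0`. -/
lemma pairing_bounds {V : Type*} [NormedAddCommGroup V] [InnerProductSpace ℝ V]
    {α β : V} (hα : α ≠ 0) (hn : ‖β‖ = ‖α‖) (h1 : β ≠ α) (h2 : β ≠ -α) :
    -2 < 2 * ⟪β, α⟫ / ⟪α, α⟫ ∧ 2 * ⟪β, α⟫ / ⟪α, α⟫ < 2 := by
  have hpos : 0 < ⟪α, α⟫ := real_inner_self_pos.2 hα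
  have hs : 0 < ‖β - α‖ := norm_pos_iff.2 (sub_ne_zero.2 h1)
  have ha : 0 < ‖β + α‖ := norm_pos_iff.2 fun h => h2 (eq_neg_of_add_eq_zero_left h)
  have es := norm_sub_sq_real β α
  have ea := norm_add_sq_real β α
  have e := real_inner_self_eq_norm_sq α
  rw [hn] at es ea
  rw [lt_div_iff₀ hpos, div_lt_iff₀ hpos]
  constructor <;> nlinarith [pow_pos hs 2, pow_pos ha 2]

theorem stmt_17
    {V : Type*} [NormedAddCommGroup V] [InnerProductSpace ℝ V] [FiniteDimensional ℝ V]
    (R : Set V) (hfin : R.Finite) (hspan : Submodule.span ℝ R = ⊤)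
    (h0 : (0 : V) ∉ R)
    (hcrys : ∀ α ∈ R, ∀ β ∈ R, ∃ n : ℤ, 2 * ⟪β, α⟫ / ⟪α, α⟫ = (n : ℝ))
    (hred : ∀ α ∈ R, ∀ c : ℝ, c • α ∈ R → c = 1 ∨ c = -1)
    (hrefl : ∀ α ∈ R, ∀ β ∈ R, β - (2 * ⟪β, α⟫ / ⟪α, α⟫) • α ∈ R)
    (σ : V ≃ₗᵢ[ℝ] V) (hσ : σ '' R = R)
    (α : V) (hα : α ∈ R)
    (hsum : α - σ α + σ (σ α) - σ (σ (σ α)) + σ (σ (σ (σ α))) = 0) :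
    (σ α ≠ α ∧ σ α ≠ -α) ∧
    (σ (σ α) ≠ α ∧ σ (σ α) ≠ -α) ∧
    (σ (σ (σ α)) ≠ α ∧ σ (σ (σ α)) ≠ -α) ∧
    (σ (σ (σ (σ α))) ≠ α ∧ σ (σ (σ (σ α))) ≠ -α) ∧
    2 * ⟪σ α, α⟫ / ⟪α, α⟫ = -(2 * ⟪σ (σ (σ (σ α))), α⟫ / ⟪α, α⟫) ∧
    2 * ⟪σ (σ α), α⟫ / ⟪α, α⟫ = -(2 * ⟪σ (σ (σ α)), α⟫ / ⟪α, α⟫) ∧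
    Xor'
      (2 * ⟪σ α, α⟫ / ⟪α, α⟫ = 1 ∧ 2 * ⟪σ (σ α), α⟫ / ⟪α, α⟫ = 0)
      (2 * ⟪σ α, α⟫ / ⟪α, α⟫ = 0 ∧ 2 * ⟪σ (σ α), α⟫ / ⟪α, α⟫ = -1) := by
  have hα0 : α ≠ 0 := fun h => h0 (h ▸ hα)
  have hpos : 0 < ⟪α, α⟫ := real_inner_self_pos.2 hα0
  have h5 : σ (σ (σ (σ (σ α)))) = -α := by
    have h := congrArg σ hsum
    simp only [map_add, map_sub, map_zero] at h
    have hadd := congrArg₂ (· + ·) hsum h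
    simp only [add_zero] at hadd
    rw [← sub_eq_zero, ← hadd]
    abel
  have n1 : σ α ≠ α := by
    intro h
    simp only [h] at hsum
    exact hα0 (by rw [← hsum]; abel)
  have m1 : σ α ≠ -α := by
    intro h
    simp only [h, map_neg, neg_neg] at hsum
    have : (5 : ℝ) • α = 0 := by rw [← hsum]; module
    simp [hα0] at this
  have n2 : σ (σ α) ≠ α := fun h => m1 (by simpa only [h] using h5)
  have m2 : σ (σ α) ≠ -α := fun h => m1 (by simpa only [h, map_neg, neg_neg] using h5)
  -- `σ³α = ±α` gives `σ⁶α = α`, whereas `σ⁶α = -σα`.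
  have h6 : σ (σ (σ (σ (σ (σ α))))) = -σ α := by rw [h5, map_neg]
  have n3 : σ (σ (σ α)) ≠ α := fun h => m1 (by
    simp only [h] at h6
    exact neg_eq_iff_eq_neg.1 h6.symm)
  have m3 : σ (σ (σ α)) ≠ -α := fun h => m1 (by
    simp only [h, map_neg, neg_neg] at h6
    exact neg_eq_iff_eq_neg.1 h6.symm)
  have n4 : σ (σ (σ (σ α))) ≠ α := fun h => m1 (by simpa only [h] using h5)
  have m4 : σ (σ (σ (σ α))) ≠ -α := fun h => n1 (by
    simpa only [h, map_neg, neg_inj] using h5)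
  have i4 : ⟪σ α, α⟫ = -⟪σ (σ (σ (σ α))), α⟫ := by
    rw [← σ.inner_map_map (σ (σ (σ (σ α)))) α, h5, inner_neg_left, neg_neg, real_inner_comm]
  have i3 : ⟪σ (σ α), α⟫ = -⟪σ (σ (σ α)), α⟫ := by
    rw [← σ.inner_map_map (σ (σ (σ α))) α, ← σ.inner_map_map (σ (σ (σ (σ α)))) (σ α), h5,
      inner_neg_left, neg_neg, real_inner_comm]
  have hrel : 2 * ⟪σ α, α⟫ / ⟪α, α⟫ - 2 * ⟪σ (σ α), α⟫ / ⟪α, α⟫ = 1 := by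
    have h := congrArg (fun v => ⟪v, α⟫) hsum
    simp only [inner_add_left, inner_sub_left, inner_zero_left] at h
    rw [← sub_div, div_eq_one_iff_eq hpos.ne']
    linarith
  have hmem : ∀ β ∈ R, σ β ∈ R := fun β hβ => hσ ▸ Set.mem_image_of_mem σ hβ
  obtain ⟨a, ha⟩ := hcrys α hα (σ α) (hmem _ hα)
  obtain ⟨b, hb⟩ := hcrys α hα (σ (σ α)) (hmem _ (hmem _ hα))
  have b1 := pairing_bounds hα0 (by simp) n1 m1
  have b2 := pairing_bounds hα0 (by simp) n2 m2
  refine ⟨⟨n1, m1⟩, ⟨n2, m2⟩, ⟨n3, m3⟩, ⟨n4, m4⟩, by rw [i4]; ring, by rw [i3]; ring, ?_⟩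
  rw [ha] at b1 hrel ⊢
  rw [hb] at b2 hrel ⊢
  norm_cast at b1 b2 hrel ⊢
  have hc : (a = 1 ∧ b = 0) ∨ (a = 0 ∧ b = -1) := by omega
  rcases hc with ⟨rfl, rfl⟩ | ⟨rfl, rfl⟩ <;> simp [Xor', Xor]
end
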